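/- The center of the affine Hecke–Clifford superalgebra H_n (equivalently, its supercenter) consists exactly of the symmetric polynomials in X_1+X_1^{−1},…,X_n+X_n^{−1}: an element z ∈ H_n satisfies zy = yz for all y ∈ H_n if and only if z lies in F[X_1+X_1^{−1},…,X_n+X_n^{−1}]^{S_n}. -/

import Mathlib

set_option maxHeartbeats 1000000

namespace HC

/-- Generators of the affine Hecke–Clifford superalgebra `H_n`. -/
inductive Gen (n : ℕ) : Type
  | X : Fin n → Gen n
  | Xinv : Fin n → Gen n
  | C : Fin n → Gen n
  | T : Fin (n - 1) → Gen n

/-- The node `i` of `Fin n`, for `i : Fin (n-1)` (1-based: the node `i`). -/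
def lo {n : ℕ} (i : Fin (n - 1)) : Fin n :=
  ⟨i.val, by have := i.isLt; omega⟩

/-- The node `i+1` of `Fin n`, for `i : Fin (n-1)`. -/
def hi {n : ℕ} (i : Fin (n - 1)) : Fin n :=
  ⟨i.val + 1, by have := i.isLt; omega⟩

variable (F : Type) [Field F]

/-- The free algebra on the generators. -/
abbrev FA (n : ℕ) : Type := FreeAlgebra F (Gen n)

noncomputable def fx {n : ℕ} (i : Fin n) : FA F n := FreeAlgebra.ι F (Gen.X i)
noncomputable def fxinv {n : ℕ} (i : Fin n) : FA F n := FreeAlgebra.ι F (Gen.Xinv i)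
noncomputable def fc {n : ℕ} (i : Fin n) : FA F n := FreeAlgebra.ι F (Gen.C i)
noncomputable def ft {n : ℕ} (i : Fin (n - 1)) : FA F n := FreeAlgebra.ι F (Gen.T i)

/-- The defining relations of the affine Hecke–Clifford superalgebra, with parameter
`q` and `ξ = q - q⁻¹`. -/
inductive Rel (q : F) (n : ℕ) : FA F n → FA F n → Prop
  | XXinv (i : Fin n) : Rel q n (fx F i * fxinv F i) 1
  | XinvX (i : Fin n) : Rel q n (fxinv F i * fx F i) 1
  | XX (i j : Fin n) : Rel q n (fx F i * fx F j) (fx F j * fx F i)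
  | XiXi (i j : Fin n) : Rel q n (fxinv F i * fxinv F j) (fxinv F j * fxinv F i)
  | XXi (i j : Fin n) (h : i ≠ j) : Rel q n (fx F i * fxinv F j) (fxinv F j * fx F i)
  | CC (i : Fin n) : Rel q n (fc F i * fc F i) 1
  | Canti (i j : Fin n) (h : i ≠ j) : Rel q n (fc F i * fc F j) (-(fc F j * fc F i))
  | CX (i : Fin n) : Rel q n (fc F i * fx F i) (fxinv F i * fc F i)
  | CXi (i : Fin n) : Rel q n (fc F i * fxinv F i) (fx F i * fc F i)
  | CXo (i j : Fin n) (h : i ≠ j) : Rel q n (fc F i * fx F j) (fx F j * fc F i)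
  | CXio (i j : Fin n) (h : i ≠ j) : Rel q n (fc F i * fxinv F j) (fxinv F j * fc F i)
  | Tquad (i : Fin (n - 1)) : Rel q n (ft F i * ft F i) ((q - q⁻¹) • ft F i + 1)
  | Tbraid (i j : Fin (n - 1)) (h : (j : ℕ) = (i : ℕ) + 1) :
      Rel q n (ft F i * ft F j * ft F i) (ft F j * ft F i * ft F j)
  | TTfar (i j : Fin (n - 1)) (h : (i : ℕ) + 1 < (j : ℕ)) :
      Rel q n (ft F i * ft F j) (ft F j * ft F i)
  | TC (i : Fin (n - 1)) : Rel q n (ft F i * fc F (lo i)) (fc F (hi i) * ft F i)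
  | TCo (i : Fin (n - 1)) (j : Fin n) (h1 : j ≠ lo i) (h2 : j ≠ hi i) :
      Rel q n (ft F i * fc F j) (fc F j * ft F i)
  | TXo (i : Fin (n - 1)) (j : Fin n) (h1 : j ≠ lo i) (h2 : j ≠ hi i) :
      Rel q n (ft F i * fx F j) (fx F j * ft F i)
  | TXio (i : Fin (n - 1)) (j : Fin n) (h1 : j ≠ lo i) (h2 : j ≠ hi i) :
      Rel q n (ft F i * fxinv F j) (fxinv F j * ft F i)
  | cross (i : Fin (n - 1)) :
      Rel q n ((ft F i + (q - q⁻¹) • (fc F (lo i) * fc F (hi i))) * fx F (lo i) * ft F i)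
        (fx F (hi i))

/-- The affine Hecke–Clifford superalgebra `H_n` over `F` with parameter `q`. -/
abbrev H (q : F) (n : ℕ) : Type := RingQuot (Rel F q n)

noncomputable def X (q : F) {n : ℕ} (i : Fin n) : H F q n :=
  RingQuot.mkAlgHom F (Rel F q n) (fx F i)

noncomputable def Xinv (q : F) {n : ℕ} (i : Fin n) : H F q n :=
  RingQuot.mkAlgHom F (Rel F q n) (fxinv F i)

noncomputable def C (q : F) {n : ℕ} (i : Fin n) : H F q n :=
  RingQuot.mkAlgHom F (Rel F q n) (fc F i)

noncomputable def T (q : F) {n : ℕ} (i : Fin (n - 1)) : H F q n :=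
  RingQuot.mkAlgHom F (Rel F q n) (ft F i)

/-- `q` is either a primitive root of unity of odd order (including `q = 1`)
or not a root of unity at all (and `q ≠ 0`). -/
def GoodParam (q : F) : Prop :=
  q ≠ 0 ∧ ((∃ m : ℕ, Odd m ∧ IsPrimitiveRoot q m) ∨ ∀ m : ℕ, 0 < m → q ^ m ≠ 1)

/-- `X_i^a` for an integer exponent `a ∈ ℤ`. -/
noncomputable def XZ (q : F) {n : ℕ} (i : Fin n) (a : ℤ) : H F q n :=
  if 0 ≤ a then X F q i ^ a.toNat else Xinv F q i ^ (-a).toNat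

/-- The monomial `X^α = X_1^{α_1} ⋯ X_n^{α_n}` for `α ∈ ℤ^n`. -/
noncomputable def Xmon (q : F) {n : ℕ} (α : Fin n → ℤ) : H F q n :=
  ((List.finRange n).map fun i => XZ F q i (α i)).prod

/-- The monomial `C^β = C_1^{β_1} ⋯ C_n^{β_n}` for `β ∈ {0,1}^n`. -/
noncomputable def Cmon (q : F) {n : ℕ} (β : Fin n → Bool) : H F q n :=
  ((List.finRange n).map fun i => if β i then C F q i else 1).prod

/-- The basic transposition `s_i = (i, i+1)` of `S_n`. -/
def s {n : ℕ} (i : Fin (n - 1)) : Equiv.Perm (Fin n) := Equiv.swap (lo i) (hi i)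

/-- The Coxeter length (number of inversions) of a permutation of `Fin n`. -/
def len {n : ℕ} (w : Equiv.Perm (Fin n)) : ℕ :=
  ((Finset.univ : Finset (Fin n × Fin n)).filter fun p => p.1 < p.2 ∧ w p.2 < w p.1).card

/-- `Tw` is the family of standard basis elements `T_w`, `w ∈ S_n`: it satisfies
`T_1 = 1`, `T_{s_i} = T_i`, and `T_{s_i w} = T_i T_w` whenever `ℓ(s_i w) = ℓ(w) + 1`.
These conditions determine the family uniquely. -/
def IsTFam (q : F) {n : ℕ} (Tw : Equiv.Perm (Fin n) → H F q n) : Prop :=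
  Tw 1 = 1 ∧ (∀ i : Fin (n - 1), Tw (s i) = T F q i) ∧
    ∀ (i : Fin (n - 1)) (w : Equiv.Perm (Fin n)),
      len (s i * w) = len w + 1 → Tw (s i * w) = T F q i * Tw w

/-- `h` is the quantum characteristic of `q`:  the smallest positive integer with
`q^{1-h} + q^{3-h} + ⋯ + q^{h-1} = 0`. -/
def qcharEq (q : F) (h : ℕ) : Prop :=
  0 < h ∧ (∑ k ∈ Finset.range h, q ^ (1 - (h : ℤ) + 2 * (k : ℤ))) = 0 ∧
    ∀ h' : ℕ, 0 < h' → h' < h →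
      (∑ k ∈ Finset.range h', q ^ (1 - (h' : ℤ) + 2 * (k : ℤ))) ≠ 0

/-- `i ∈ I = {0, 1, …, ℓ}` where `ℓ = (h-1)/2` (no condition if the quantum
characteristic is infinite). -/
def memI (q : F) (i : ℕ) : Prop := ∀ h : ℕ, qcharEq F q h → 2 * i + 1 ≤ h

/-- `q(i) = 2(q^{2i+1} + q^{-2i-1})/(q + q⁻¹)`. -/
noncomputable def qres (q : F) (i : ℕ) : F :=
  2 * (q ^ (2 * i + 1) + q⁻¹ ^ (2 * i + 1)) / (q + q⁻¹)

/-- Index of the block containing position `k` (0-based), for a composition given as a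
list of parts. -/
def blk : List ℕ → ℕ → ℕ
  | [], _ => 0
  | a :: rest, k => if k < a then 0 else blk rest (k - a) + 1

/-- Membership in the Young subgroup `S_μ ⊆ S_n`. -/
def InYoung {n : ℕ} (μ : List ℕ) (w : Equiv.Perm (Fin n)) : Prop :=
  ∀ k : Fin n, blk μ (w k).val = blk μ k.val

/-- `μ` is a composition of `n`. -/
def IsComposition (μ : List ℕ) (n : ℕ) : Prop := (∀ a ∈ μ, 0 < a) ∧ μ.sum = n

/-- The parabolic subalgebra generated by all `X_i^{±1}`, `C_i`, and the `T_j` with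
`j` in a set `J` of admissible indices. -/
def parabolicJ (q : F) {n : ℕ} (J : Set (Fin (n - 1))) : Subalgebra F (H F q n) :=
  Algebra.adjoin F
    ((Set.range fun i : Fin n => X F q i) ∪ (Set.range fun i : Fin n => Xinv F q i) ∪
      (Set.range fun i : Fin n => C F q i) ∪ {h | ∃ j ∈ J, h = T F q j})

/-- The parabolic subalgebra `H_μ` for a composition `μ`. -/
def parabolicC (q : F) {n : ℕ} (μ : List ℕ) : Subalgebra F (H F q n) :=
  parabolicJ F q {j | InYoung μ (s j)}

/-- The classical parabolic subalgebra `H^cl_μ`, generated by the `T_j` with `s_j ∈ S_μ`. -/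
def clparC (q : F) {n : ℕ} (μ : List ℕ) : Subalgebra F (H F q n) :=
  Algebra.adjoin F {h | ∃ j : Fin (n - 1), InYoung μ (s j) ∧ h = T F q j}

/-- The finite Hecke–Clifford subalgebra `H^fn_n`, generated by all `C_i` and `T_j`. -/
def Hfin (q : F) (n : ℕ) : Subalgebra F (H F q n) :=
  Algebra.adjoin F
    ((Set.range fun i : Fin n => C F q i) ∪ {h | ∃ j : Fin (n - 1), h = T F q j})

/-- `x` is a minimal length `(S_μ, S_ν)`-double coset representative. -/
def IsMinDC {n : ℕ} (μ ν : List ℕ) (x : Equiv.Perm (Fin n)) : Prop :=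
  ∀ u v : Equiv.Perm (Fin n), InYoung μ u → InYoung ν v → len x ≤ len (u * x * v)

/-- `w ∈ S_μ x S_ν`. -/
def InDC {n : ℕ} (μ ν : List ℕ) (x w : Equiv.Perm (Fin n)) : Prop :=
  ∃ u v : Equiv.Perm (Fin n), InYoung μ u ∧ InYoung ν v ∧ w = u * x * v

/-- A covering step in the Bruhat order: multiplication by a reflection increasing length. -/
def BruhatStep {n : ℕ} (v w : Equiv.Perm (Fin n)) : Prop :=
  ∃ a b : Fin n, a ≠ b ∧ w = Equiv.swap a b * v ∧ len v < len w

/-- The Bruhat order on `S_n`. -/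
def BruhatLE {n : ℕ} : Equiv.Perm (Fin n) → Equiv.Perm (Fin n) → Prop :=
  Relation.ReflTransGen BruhatStep

/-- The space of `A`-equivariant linear maps between two representations of the
`F`-algebra `A`. -/
def eqvHoms {A : Type} [Ring A] [Algebra F A] {M N : Type}
    [AddCommGroup M] [Module F M] [AddCommGroup N] [Module F N]
    (ρM : A →ₐ[F] Module.End F M) (ρN : A →ₐ[F] Module.End F N) :
    Submodule F (M →ₗ[F] N) where
  carrier := {f | ∀ (x : A) (m : M), f (ρM x m) = ρN x (f m)}
  add_mem' := by
    intro f g hf hg x m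
    simp only [LinearMap.add_apply, hf x m, hg x m, map_add]
  zero_mem' := by
    intro x m
    simp only [LinearMap.zero_apply, map_zero]
  smul_mem' := by
    intro c f hf x m
    simp only [LinearMap.smul_apply, hf x m, map_smul]

/-- `(E, ρE, ι)` is the module induced along the algebra morphism `φ : B →ₐ A` from
the `B`-representation `(M, ρ)`, i.e. `E = A ⊗_B M`, characterized by its universal
property. -/
def IsInducedAlong {A B : Type} [Ring A] [Ring B] [Algebra F A] [Algebra F B]
    (φ : B →ₐ[F] A) {M : Type} [AddCommGroup M] [Module F M]
    (ρ : B →ₐ[F] Module.End F M) {E : Type} [AddCommGroup E] [Module F E]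
    (ρE : A →ₐ[F] Module.End F E) (ι : M →ₗ[F] E) : Prop :=
  (∀ (b : B) (m : M), ι (ρ b m) = ρE (φ b) (ι m)) ∧
    ∀ (P : Type) [AddCommGroup P] [Module F P],
      ∀ (ρP : A →ₐ[F] Module.End F P) (f : M →ₗ[F] P),
        (∀ (b : B) (m : M), f (ρ b m) = ρP (φ b) (f m)) →
        ∃! g : E →ₗ[F] P,
          (∀ (x : A) (e : E), g (ρE x e) = ρP x (g e)) ∧ ∀ m : M, g (ι m) = f m

/-- `δ` is the grading automorphism of the superalgebra `H_n`
(identity on even generators, `-1` on the odd generators `C_i`). -/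
def IsGradingAut (q : F) {n : ℕ} (δ : H F q n →ₐ[F] H F q n) : Prop :=
  (∀ i : Fin n, δ (X F q i) = X F q i) ∧ (∀ i : Fin n, δ (Xinv F q i) = Xinv F q i) ∧
    (∀ i : Fin n, δ (C F q i) = -C F q i) ∧ ∀ i : Fin (n - 1), δ (T F q i) = T F q i

/-- `τ` is the antiautomorphism of `H_n` with `τ(T_i) = T_i + ξ C_i C_{i+1}`,
`τ(C_j) = C_j`, `τ(X_j) = X_j`. -/
def IsTauAntiAut (q : F) {n : ℕ} (τ : H F q n →ₗ[F] H F q n) : Prop :=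
  Function.Bijective τ ∧ (∀ a b : H F q n, τ (a * b) = τ b * τ a) ∧ τ 1 = 1 ∧
    (∀ i : Fin (n - 1),
      τ (T F q i) = T F q i + (q - q⁻¹) • (C F q (lo i) * C F q (hi i))) ∧
    (∀ j : Fin n, τ (C F q j) = C F q j) ∧ (∀ j : Fin n, τ (X F q j) = X F q j) ∧
    ∀ j : Fin n, τ (Xinv F q j) = Xinv F q j

/-- `ρ'` is the representation of the subalgebra `B` obtained from the
`H_ν`-representation `ρν` by twisting with the isomorphism `φ_{x⁻¹}`
(determined by `X_i ↦ X_{x⁻¹ i}`, `C_i ↦ C_{x⁻¹ i}`, `T_w ↦ T_{x⁻¹ w x}`). -/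
def IsTwistedRep (q : F) {n : ℕ} (ν : List ℕ) (x : Equiv.Perm (Fin n))
    (B : Subalgebra F (H F q n)) {M : Type} [AddCommGroup M] [Module F M]
    (ρν : ↥(parabolicC F q (n := n) ν) →ₐ[F] Module.End F M)
    (ρ' : ↥B →ₐ[F] Module.End F M) : Prop :=
  (∀ (i : Fin n) (a : ↥B) (b : ↥(parabolicC F q (n := n) ν)),
      (a : H F q n) = X F q i → (b : H F q n) = X F q (x⁻¹ i) → ρ' a = ρν b) ∧
  (∀ (i : Fin n) (a : ↥B) (b : ↥(parabolicC F q (n := n) ν)),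
      (a : H F q n) = Xinv F q i → (b : H F q n) = Xinv F q (x⁻¹ i) → ρ' a = ρν b) ∧
  (∀ (i : Fin n) (a : ↥B) (b : ↥(parabolicC F q (n := n) ν)),
      (a : H F q n) = C F q i → (b : H F q n) = C F q (x⁻¹ i) → ρ' a = ρν b) ∧
  ∀ (j j' : Fin (n - 1)) (a : ↥B) (b : ↥(parabolicC F q (n := n) ν)),
      lo j' = x⁻¹ (lo j) → (a : H F q n) = T F q j → (b : H F q n) = T F q j' → ρ' a = ρν b

/-- The element `f = a_d X_1^d + ⋯ + a_1 X_1 + a_0` of `H_n`. -/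
noncomputable def felem (q : F) (n d : ℕ) (aa : ℕ → F) : H F q n :=
  if h : 0 < n then ∑ i ∈ Finset.range (d + 1), aa i • X F q (⟨0, h⟩ : Fin n) ^ i else 0

/-- The conditions on the coefficients of `f`: degree `d ≥ 1`, monic, and
`a_i = a_0 a_{d-i}`. -/
def GoodPoly (d : ℕ) (aa : ℕ → F) : Prop :=
  1 ≤ d ∧ aa d = 1 ∧ (∀ i ≤ d, aa i = aa 0 * aa (d - i)) ∧ ∀ i : ℕ, d < i → aa i = 0

/-- The relation generating the two-sided ideal `I_f` of `H_n`. -/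
inductive CycRel (q : F) (n d : ℕ) (aa : ℕ → F) : H F q n → H F q n → Prop
  | rel : CycRel q n d aa (felem F q n d aa) 0

/-- The cyclotomic Hecke–Clifford superalgebra `H_n^f = H_n / I_f`. -/
abbrev Hf (q : F) (n d : ℕ) (aa : ℕ → F) : Type := RingQuot (CycRel F q n d aa)

/-- The canonical quotient map `H_n → H_n^f`. -/
noncomputable def cyc (q : F) (n d : ℕ) (aa : ℕ → F) : H F q n →ₐ[F] Hf F q n d aa :=
  RingQuot.mkAlgHom F (CycRel F q n d aa)

noncomputable def Xf (q : F) (n d : ℕ) (aa : ℕ → F) (i : Fin n) : Hf F q n d aa :=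
  cyc F q n d aa (X F q i)
noncomputable def Xinvf (q : F) (n d : ℕ) (aa : ℕ → F) (i : Fin n) : Hf F q n d aa :=
  cyc F q n d aa (Xinv F q i)
noncomputable def Cf (q : F) (n d : ℕ) (aa : ℕ → F) (i : Fin n) : Hf F q n d aa :=
  cyc F q n d aa (C F q i)
noncomputable def Tf (q : F) (n d : ℕ) (aa : ℕ → F) (i : Fin (n - 1)) : Hf F q n d aa :=
  cyc F q n d aa (T F q i)

/-- `e` is the canonical embedding `H_k^f → H_N^f` (shifting all indices by `sh`;
for `sh = 0` this is the standard identification of `H_k^f` with a subalgebra of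
`H_N^f`). -/
def IsCycEmb (q : F) (k N d : ℕ) (aa : ℕ → F) (sh : ℕ)
    (e : Hf F q k d aa →ₐ[F] Hf F q N d aa) : Prop :=
  (∀ (i : Fin k) (i' : Fin N), (i' : ℕ) = sh + (i : ℕ) →
      e (Xf F q k d aa i) = Xf F q N d aa i') ∧
  (∀ (i : Fin k) (i' : Fin N), (i' : ℕ) = sh + (i : ℕ) →
      e (Xinvf F q k d aa i) = Xinvf F q N d aa i') ∧
  (∀ (i : Fin k) (i' : Fin N), (i' : ℕ) = sh + (i : ℕ) →
      e (Cf F q k d aa i) = Cf F q N d aa i') ∧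
  ∀ (j : Fin (k - 1)) (j' : Fin (N - 1)), (j' : ℕ) = sh + (j : ℕ) →
      e (Tf F q k d aa j) = Tf F q N d aa j'

/-- `δ` is the grading automorphism of the superalgebra `H_n^f`. -/
def IsCycGrading (q : F) (n d : ℕ) (aa : ℕ → F)
    (δ : Hf F q n d aa →ₐ[F] Hf F q n d aa) : Prop :=
  (∀ i : Fin n, δ (Xf F q n d aa i) = Xf F q n d aa i) ∧
  (∀ i : Fin n, δ (Xinvf F q n d aa i) = Xinvf F q n d aa i) ∧
  (∀ i : Fin n, δ (Cf F q n d aa i) = -Cf F q n d aa i) ∧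
  ∀ j : Fin (n - 1), δ (Tf F q n d aa j) = Tf F q n d aa j

/-- The elements `f_1 = f`, `f_{i+1} = (T_i + ξ C_i C_{i+1}) f_i T_i` of `H_n`
(0-based indexing: `fseq k = f_{k+1}`). -/
noncomputable def fseq (q : F) (n d : ℕ) (aa : ℕ → F) : ℕ → H F q n
  | 0 => felem F q n d aa
  | k + 1 =>
    if h : k < n - 1 then
      (T F q (⟨k, h⟩ : Fin (n - 1)) +
          (q - q⁻¹) • (C F q (lo (⟨k, h⟩ : Fin (n - 1))) *
            C F q (hi (⟨k, h⟩ : Fin (n - 1))))) *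
        fseq q n d aa k * T F q (⟨k, h⟩ : Fin (n - 1))
    else 0

/-- `f_Z = f_{z_1} ⋯ f_{z_u}` for `Z = {z_1 < ⋯ < z_u} ⊆ {1,…,n}` (0-based). -/
noncomputable def fZ (q : F) (n d : ℕ) (aa : ℕ → F) (Z : Finset (Fin n)) : H F q n :=
  ((Z.sort (· ≤ ·)).map fun z => fseq F q n d aa (z : ℕ)).prod

/-- The evaluation of the monomial `∏ (X_i + X_i⁻¹)^{α_i}` in `H_n`. -/
noncomputable def evalSym (F : Type) [Field F] (q : F) {n : ℕ} (α : Fin n → ℕ) : H F q n :=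
  ((List.finRange n).map fun i => (X F q i + Xinv F q i) ^ α i).prod

section Relations

variable {F : Type} [Field F] {q : F} {n : ℕ}

theorem X_mul_Xinv (i : Fin n) : X F q i * Xinv F q i = 1 := by
  simpa [X, Xinv] using RingQuot.mkAlgHom_rel F (Rel.XXinv (q := q) i)

theorem Xinv_mul_X (i : Fin n) : Xinv F q i * X F q i = 1 := by
  simpa [X, Xinv] using RingQuot.mkAlgHom_rel F (Rel.XinvX (q := q) i)

theorem commute_X_X (i j : Fin n) : Commute (X F q i) (X F q j) := by
  simpa [commute_iff_eq, X] using RingQuot.mkAlgHom_rel F (Rel.XX (q := q) i j)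

theorem commute_Xinv_Xinv (i j : Fin n) : Commute (Xinv F q i) (Xinv F q j) := by
  simpa [commute_iff_eq, Xinv] using RingQuot.mkAlgHom_rel F (Rel.XiXi (q := q) i j)

theorem commute_X_Xinv (i j : Fin n) : Commute (X F q i) (Xinv F q j) := by
  by_cases h : i = j
  · subst h
    rw [Commute, SemiconjBy, X_mul_Xinv, Xinv_mul_X]
  · simpa [commute_iff_eq, X, Xinv] using RingQuot.mkAlgHom_rel F (Rel.XXi (q := q) i j h)

theorem C_mul_self (i : Fin n) : C F q i * C F q i = 1 := by
  simpa [C] using RingQuot.mkAlgHom_rel F (Rel.CC (q := q) i)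

theorem C_mul_C {i j : Fin n} (h : i ≠ j) : C F q i * C F q j = -(C F q j * C F q i) := by
  simpa [C] using RingQuot.mkAlgHom_rel F (Rel.Canti (q := q) i j h)

theorem C_mul_X (i : Fin n) : C F q i * X F q i = Xinv F q i * C F q i := by
  simpa [C, X, Xinv] using RingQuot.mkAlgHom_rel F (Rel.CX (q := q) i)

theorem C_mul_Xinv (i : Fin n) : C F q i * Xinv F q i = X F q i * C F q i := by
  simpa [C, X, Xinv] using RingQuot.mkAlgHom_rel F (Rel.CXi (q := q) i)

theorem commute_C_X {i j : Fin n} (h : i ≠ j) : Commute (C F q i) (X F q j) := by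
  simpa [commute_iff_eq, C, X] using RingQuot.mkAlgHom_rel F (Rel.CXo (q := q) i j h)

theorem commute_C_Xinv {i j : Fin n} (h : i ≠ j) : Commute (C F q i) (Xinv F q j) := by
  simpa [commute_iff_eq, C, Xinv] using RingQuot.mkAlgHom_rel F (Rel.CXio (q := q) i j h)

theorem T_mul_self (i : Fin (n - 1)) : T F q i * T F q i = (q - q⁻¹) • T F q i + 1 := by
  simpa only [T, map_mul, map_add, map_smul, map_one] using
    RingQuot.mkAlgHom_rel F (Rel.Tquad (q := q) i)

theorem T_braid {i j : Fin (n - 1)} (h : (j : ℕ) = i + 1) :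
    T F q i * T F q j * T F q i = T F q j * T F q i * T F q j := by
  simpa [T] using RingQuot.mkAlgHom_rel F (Rel.Tbraid (q := q) i j h)

theorem commute_T_T {i j : Fin (n - 1)} (h : (i : ℕ) + 1 < j) :
    Commute (T F q i) (T F q j) := by
  simpa [commute_iff_eq, T] using RingQuot.mkAlgHom_rel F (Rel.TTfar (q := q) i j h)

theorem T_mul_C_lo (i : Fin (n - 1)) : T F q i * C F q (lo i) = C F q (hi i) * T F q i := by
  simpa [T, C] using RingQuot.mkAlgHom_rel F (Rel.TC (q := q) i)

theorem commute_T_C {i : Fin (n - 1)} {j : Fin n} (h1 : j ≠ lo i) (h2 : j ≠ hi i) :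
    Commute (T F q i) (C F q j) := by
  simpa [commute_iff_eq, T, C] using RingQuot.mkAlgHom_rel F (Rel.TCo (q := q) i j h1 h2)

theorem commute_T_X {i : Fin (n - 1)} {j : Fin n} (h1 : j ≠ lo i) (h2 : j ≠ hi i) :
    Commute (T F q i) (X F q j) := by
  simpa [commute_iff_eq, T, X] using RingQuot.mkAlgHom_rel F (Rel.TXo (q := q) i j h1 h2)

theorem commute_T_Xinv {i : Fin (n - 1)} {j : Fin n} (h1 : j ≠ lo i) (h2 : j ≠ hi i) :
    Commute (T F q i) (Xinv F q j) := by
  simpa [commute_iff_eq, T, Xinv] using RingQuot.mkAlgHom_rel F (Rel.TXio (q := q) i j h1 h2)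

theorem T_cross (i : Fin (n - 1)) :
    (T F q i + (q - q⁻¹) • (C F q (lo i) * C F q (hi i))) * X F q (lo i) * T F q i =
      X F q (hi i) := by
  simpa only [T, C, X, map_mul, map_add, map_smul] using
    RingQuot.mkAlgHom_rel F (Rel.cross (q := q) i)

/-- The element `X_i + X_i⁻¹` of `H_n`. -/
noncomputable def U (F : Type) [Field F] (q : F) {n : ℕ} (i : Fin n) : H F q n :=
  X F q i + Xinv F q i

theorem commute_X_U (i j : Fin n) : Commute (X F q i) (U F q j) :=
  (commute_X_X i j).add_right (commute_X_Xinv i j)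

theorem commute_Xinv_U (i j : Fin n) : Commute (Xinv F q i) (U F q j) :=
  (commute_X_Xinv j i).symm.add_right (commute_Xinv_Xinv i j)

theorem commute_U_U (i j : Fin n) : Commute (U F q i) (U F q j) :=
  (commute_X_U i j).add_left (commute_Xinv_U i j)

theorem commute_C_U (i j : Fin n) : Commute (C F q i) (U F q j) := by
  by_cases h : i = j
  · subst h
    rw [Commute, SemiconjBy, U, mul_add, add_mul, C_mul_X, C_mul_Xinv, add_comm]
  · exact (commute_C_X h).add_right (commute_C_Xinv h)

theorem commute_T_U {i : Fin (n - 1)} {j : Fin n} (h1 : j ≠ lo i) (h2 : j ≠ hi i) :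
    Commute (T F q i) (U F q j) :=
  (commute_T_X h1 h2).add_right (commute_T_Xinv h1 h2)

theorem X_mul_self (i : Fin n) : X F q i * X F q i = U F q i * X F q i - 1 := by
  rw [U, add_mul, Xinv_mul_X, add_sub_cancel_right]

theorem T_mul_T_sub (i : Fin (n - 1)) : T F q i * (T F q i - algebraMap F _ (q - q⁻¹)) = 1 := by
  rw [mul_sub, T_mul_self, ← Algebra.commutes, ← Algebra.smul_def, add_sub_cancel_left]

theorem T_mul_X_lo (i : Fin (n - 1)) :
    T F q i * X F q (lo i) = X F q (hi i) * T F q i - (q - q⁻¹) • X F q (hi i)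
      - (q - q⁻¹) • (C F q (lo i) * C F q (hi i) * X F q (lo i)) := by
  have h := congrArg (· * (T F q i - algebraMap F _ (q - q⁻¹))) (T_cross (q := q) i)
  simp only [mul_assoc, T_mul_T_sub, mul_one] at h
  rw [add_mul, mul_sub, ← Algebra.commutes, ← Algebra.smul_def, smul_mul_assoc] at h
  rw [eq_sub_iff_add_eq, ← h, mul_assoc]

end Relations

section Spanning

theorem mul_mem_of_mem_adjoin {F A : Type*} [CommRing F] [Ring A] [Algebra F A]
    {N : Submodule F A} {gens : Set A} (h : ∀ g ∈ gens, ∀ a ∈ N, a * g ∈ N)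
    {x : A} (hx : x ∈ Algebra.adjoin F gens) {a : A} (ha : a ∈ N) : a * x ∈ N := by
  induction hx using Algebra.adjoin_induction generalizing a with
  | mem x hx => exact h x hx a ha
  | algebraMap r =>
    rw [← Algebra.commutes, ← Algebra.smul_def]
    exact N.smul_mem r ha
  | add x y _ _ hx hy => rw [mul_add]; exact N.add_mem (hx ha) (hy ha)
  | mul x y _ _ hx hy => rw [← mul_assoc]; exact hy (hx ha)

theorem mem_of_mem_adjoin {F A : Type*} [CommRing F] [Ring A] [Algebra F A]
    {N : Submodule F A} {gens : Set A} (h1 : 1 ∈ N) (h : ∀ g ∈ gens, ∀ a ∈ N, a * g ∈ N)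
    {x : A} (hx : x ∈ Algebra.adjoin F gens) : x ∈ N := by
  simpa using mul_mem_of_mem_adjoin h hx h1

theorem commute_of_mem_adjoin {F A : Type*} [CommRing F] [Ring A] [Algebra F A]
    {gens : Set A} {c : A} (h : ∀ g ∈ gens, Commute c g)
    {x : A} (hx : x ∈ Algebra.adjoin F gens) : Commute c x := by
  induction hx using Algebra.adjoin_induction with
  | mem x hx => exact h x hx
  | algebraMap r => exact (Algebra.commutes r c).symm
  | add x y _ _ hx hy => exact hx.add_right hy
  | mul x y _ _ hx hy => exact hx.mul_right hy

/-- The left `S`-module `S + S e` spanned by `1` and `e`. -/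
def leftSpanPair {F A : Type*} [CommRing F] [Ring A] [Algebra F A]
    (S : Subalgebra F A) (e : A) : Submodule F A :=
  Subalgebra.toSubmodule S ⊔ (Subalgebra.toSubmodule S).map (LinearMap.mulRight F e)

theorem mem_leftSpanPair {F A : Type*} [CommRing F] [Ring A] [Algebra F A]
    {S : Subalgebra F A} {e z : A} :
    z ∈ leftSpanPair S e ↔ ∃ a ∈ S, ∃ b ∈ S, z = a + b * e := by
  simp only [leftSpanPair, Submodule.mem_sup, Submodule.mem_map, Subalgebra.mem_toSubmodule,
    LinearMap.mulRight_apply, exists_exists_and_eq_and, eq_comm (a := z)]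

theorem leftSpanPair_left_mul {F A : Type*} [CommRing F] [Ring A] [Algebra F A]
    {S : Subalgebra F A} {e s z : A} (hs : s ∈ S) (hz : z ∈ leftSpanPair S e) :
    s * z ∈ leftSpanPair S e := by
  obtain ⟨a, ha, b, hb, rfl⟩ := mem_leftSpanPair.1 hz
  exact mem_leftSpanPair.2 ⟨s * a, S.mul_mem hs ha, s * b, S.mul_mem hs hb, by noncomm_ring⟩

theorem self_mem_leftSpanPair {F A : Type*} [CommRing F] [Ring A] [Algebra F A]
    {S : Subalgebra F A} {e s : A} (hs : s ∈ S) : s ∈ leftSpanPair S e :=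
  mem_leftSpanPair.2 ⟨s, hs, 0, S.zero_mem, by simp⟩

theorem mul_mem_leftSpanPair {F A : Type*} [CommRing F] [Ring A] [Algebra F A]
    {S : Subalgebra F A} {e s : A} (hs : s ∈ S) : s * e ∈ leftSpanPair S e :=
  mem_leftSpanPair.2 ⟨0, S.zero_mem, s, hs, by simp⟩

variable (F : Type) [Field F] (q : F) (n : ℕ)

/-- The subalgebra generated by all `X_i + X_i⁻¹` and by `X_j` for the first `k` indices `j`. -/
noncomputable def polySub (k : ℕ) : Subalgebra F (H F q n) :=
  Algebra.adjoin F (Set.range (U F q) ∪ {x | ∃ j : Fin n, (j : ℕ) < k ∧ x = X F q j})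

/-- The subalgebra generated by all `X_i^{±1}` and by `C_j` for the first `k` indices `j`. -/
noncomputable def cliffSub (k : ℕ) : Subalgebra F (H F q n) :=
  Algebra.adjoin F (Set.range (X F q) ∪ Set.range (Xinv F q) ∪
    {x | ∃ j : Fin n, (j : ℕ) < k ∧ x = C F q j})

/-- The subalgebra generated by the first `m` of the elements `T_i`. -/
noncomputable def heckeSub (m : ℕ) : Subalgebra F (H F q n) :=
  Algebra.adjoin F {x | ∃ j : Fin (n - 1), (j : ℕ) < m ∧ x = T F q j}

/-- The span of the products of an element of the subalgebra generated by the `X_i^{±1}, C_i`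
and an element of the subalgebra generated by the first `m` of the `T_i`. -/
noncomputable def affSub (m : ℕ) : Submodule F (H F q n) :=
  Subalgebra.toSubmodule (cliffSub F q n n) * Subalgebra.toSubmodule (heckeSub F q n m)

variable {F q n}

theorem U_mem_polySub (i : Fin n) (k : ℕ) : U F q i ∈ polySub F q n k :=
  Algebra.subset_adjoin (Or.inl ⟨i, rfl⟩)

theorem X_mem_polySub {i : Fin n} {k : ℕ} (h : (i : ℕ) < k) : X F q i ∈ polySub F q n k :=
  Algebra.subset_adjoin (Or.inr ⟨i, h, rfl⟩)

theorem X_mem_cliffSub (i : Fin n) (k : ℕ) : X F q i ∈ cliffSub F q n k :=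
  Algebra.subset_adjoin (Or.inl (Or.inl ⟨i, rfl⟩))

theorem Xinv_mem_cliffSub (i : Fin n) (k : ℕ) : Xinv F q i ∈ cliffSub F q n k :=
  Algebra.subset_adjoin (Or.inl (Or.inr ⟨i, rfl⟩))

theorem C_mem_cliffSub {i : Fin n} {k : ℕ} (h : (i : ℕ) < k) : C F q i ∈ cliffSub F q n k :=
  Algebra.subset_adjoin (Or.inr ⟨i, h, rfl⟩)

theorem T_mem_heckeSub {i : Fin (n - 1)} {m : ℕ} (h : (i : ℕ) < m) :
    T F q i ∈ heckeSub F q n m :=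
  Algebra.subset_adjoin ⟨i, h, rfl⟩

theorem commute_X_polySub (i : Fin n) {k : ℕ} {x : H F q n} (hx : x ∈ polySub F q n k) :
    Commute (X F q i) x := by
  refine commute_of_mem_adjoin ?_ hx
  rintro _ (⟨j, rfl⟩ | ⟨j, _, rfl⟩)
  · exact commute_X_U i j
  · exact commute_X_X i j

theorem commute_C_polySub {i : Fin n} {k : ℕ} (h : k ≤ i) {x : H F q n}
    (hx : x ∈ polySub F q n k) : Commute (C F q i) x := by
  refine commute_of_mem_adjoin ?_ hx
  rintro _ (⟨j, rfl⟩ | ⟨j, hj, rfl⟩)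
  · exact commute_C_U i j
  · exact commute_C_X (by rintro rfl; omega)

theorem commute_X_cliffSub {i : Fin n} {k : ℕ} (h : k ≤ i) {x : H F q n}
    (hx : x ∈ cliffSub F q n k) : Commute (X F q i) x := by
  refine commute_of_mem_adjoin ?_ hx
  rintro _ ((⟨j, rfl⟩ | ⟨j, rfl⟩) | ⟨j, hj, rfl⟩)
  · exact commute_X_X i j
  · exact commute_X_Xinv i j
  · exact (commute_C_X (by rintro rfl; omega)).symm

theorem commute_U_cliffSub (i : Fin n) {k : ℕ} {x : H F q n}
    (hx : x ∈ cliffSub F q n k) : Commute (U F q i) x := by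
  refine commute_of_mem_adjoin ?_ hx
  rintro _ ((⟨j, rfl⟩ | ⟨j, rfl⟩) | ⟨j, hj, rfl⟩)
  · exact (commute_X_U j i).symm
  · exact (commute_Xinv_U j i).symm
  · exact (commute_C_U j i).symm

theorem commute_U_heckeSub {i : Fin n} {m : ℕ} (h : m < i) {x : H F q n}
    (hx : x ∈ heckeSub F q n m) : Commute (U F q i) x := by
  refine commute_of_mem_adjoin ?_ hx
  rintro _ ⟨j, hj, rfl⟩
  refine (commute_T_U ?_ ?_).symm <;> rintro rfl <;> simp [lo, hi] at h <;> omega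

theorem commute_U_affSub {i : Fin n} {m : ℕ} (h : m < i) {x : H F q n}
    (hx : x ∈ affSub F q n m) : Commute (U F q i) x := by
  refine Submodule.mul_induction_on hx ?_ fun _ _ hx hy => hx.add_right hy
  exact fun a ha b hb => (commute_U_cliffSub i ha).mul_right (commute_U_heckeSub h hb)

theorem polySub_zero_le_span_evalSym :
    Subalgebra.toSubmodule (polySub F q n 0) ≤
      Submodule.span F (Set.range (evalSym F q (n := n))) := by
  intro x hx
  have h1 : evalSym F q (0 : Fin n → ℕ) = 1 := by simp [evalSym]
  refine mem_of_mem_adjoin (h1 ▸ Submodule.subset_span ⟨0, rfl⟩) ?_ hx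
  rintro _ (⟨k, rfl⟩ | ⟨k, hk, rfl⟩)
  · intro a ha
    induction ha using Submodule.span_induction with
    | mem x hx =>
      obtain ⟨α, rfl⟩ := hx
      refine Submodule.subset_span ⟨Function.update α k (α k + 1), ?_⟩
      have key : ∀ l : List (Fin n), l.Nodup →
          (l.map fun i => (X F q i + Xinv F q i) ^ Function.update α k (α k + 1) i).prod =
            (l.map fun i => (X F q i + Xinv F q i) ^ α i).prod * if k ∈ l then U F q k else 1 := by
        intro l
        induction l with
        | nil => simp
        | cons a l ih =>
          intro hl
          rw [List.nodup_cons] at hl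
          rw [List.map_cons, List.prod_cons, ih hl.2, List.map_cons, List.prod_cons]
          have hc : Commute (U F q k) (l.map fun i => (X F q i + Xinv F q i) ^ α i).prod := by
            refine Commute.list_prod_right _ _ ?_
            intro y hy
            obtain ⟨i, _, rfl⟩ := List.mem_map.1 hy
            exact (commute_U_U k i).pow_right _
          by_cases hk : a = k
          · subst hk
            have hu : X F q a + Xinv F q a = U F q a := rfl
            simp only [hl.1, if_false, mul_one, List.mem_cons, true_or, if_true,
              Function.update_self, hu] at hc ⊢
            rw [pow_succ, mul_assoc, mul_assoc, hc.eq]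
          · have hk' : k ≠ a := fun h => hk h.symm
            simp [Function.update_of_ne hk, hk', mul_assoc]
      have := key (List.finRange n) (List.nodup_finRange n)
      simpa [evalSym, List.mem_finRange] using this
    | zero => simp
    | add x y _ _ hx hy => rw [add_mul]; exact Submodule.add_mem _ hx hy
    | smul r x _ hx => rw [smul_mul_assoc]; exact Submodule.smul_mem _ r hx
  · omega

theorem mem_polySub_succ {k : ℕ} (hk : k < n) {z : H F q n} (hz : z ∈ polySub F q n (k + 1)) :
    ∃ a ∈ polySub F q n k, ∃ b ∈ polySub F q n k, z = a + b * X F q ⟨k, hk⟩ := by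
  rw [← mem_leftSpanPair]
  refine mem_of_mem_adjoin (self_mem_leftSpanPair (one_mem _)) ?_ hz
  intro g hg c hc
  by_cases hgk : g = X F q ⟨k, hk⟩
  · subst hgk
    obtain ⟨a, ha, b, hb, rfl⟩ := mem_leftSpanPair.1 hc
    rw [add_mul, mul_assoc b, X_mul_self, mul_sub, ← mul_assoc, mul_one]
    exact Submodule.add_mem _ (mul_mem_leftSpanPair ha) (Submodule.sub_mem _
      (mul_mem_leftSpanPair (mul_mem hb (U_mem_polySub _ _))) (self_mem_leftSpanPair hb))
  · have hg' : g ∈ polySub F q n k := by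
      rcases hg with ⟨j, rfl⟩ | ⟨j, hj, rfl⟩
      · exact U_mem_polySub j k
      · refine X_mem_polySub (lt_of_le_of_ne (Nat.lt_succ_iff.1 hj) ?_)
        rintro rfl
        exact hgk rfl
    have hgc : Commute g c := by
      obtain ⟨a, ha, b, hb, rfl⟩ := mem_leftSpanPair.1 hc
      have hgen : ∀ x ∈ polySub F q n k, Commute g x := by
        intro x hx
        rcases hg with ⟨j, rfl⟩ | ⟨j, hj, rfl⟩
        · refine commute_of_mem_adjoin ?_ hx
          rintro _ (⟨i, rfl⟩ | ⟨i, _, rfl⟩)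
          · exact commute_U_U j i
          · exact (commute_X_U i j).symm
        · exact commute_X_polySub j hx
      exact (hgen a ha).add_right ((hgen b hb).mul_right (commute_X_polySub _ hg').symm)
    rw [← hgc.eq]
    exact leftSpanPair_left_mul hg' hc

theorem mem_cliffSub_succ {k : ℕ} (hk : k < n) {z : H F q n} (hz : z ∈ cliffSub F q n (k + 1)) :
    ∃ a ∈ cliffSub F q n k, ∃ b ∈ cliffSub F q n k, z = a + b * C F q ⟨k, hk⟩ := by
  rw [← mem_leftSpanPair]
  refine mem_of_mem_adjoin (self_mem_leftSpanPair (one_mem _)) ?_ hz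
  intro g hg c hc
  obtain ⟨a, ha, b, hb, rfl⟩ := mem_leftSpanPair.1 hc
  have key : ∀ g' ∈ cliffSub F q n k, g ∈ cliffSub F q n k →
      C F q ⟨k, hk⟩ * g = g' * C F q ⟨k, hk⟩ →
      (a + b * C F q ⟨k, hk⟩) * g ∈ leftSpanPair (cliffSub F q n k) (C F q ⟨k, hk⟩) := by
    intro g' hg' hg h
    rw [add_mul, mul_assoc, h, ← mul_assoc]
    exact Submodule.add_mem _ (self_mem_leftSpanPair (mul_mem ha hg))
      (mul_mem_leftSpanPair (mul_mem hb hg'))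
  rcases hg with (⟨j, rfl⟩ | ⟨j, rfl⟩) | ⟨j, hj, rfl⟩
  · by_cases h : ⟨k, hk⟩ = j
    · subst h
      exact key _ (Xinv_mem_cliffSub _ _) (X_mem_cliffSub _ _) (C_mul_X _)
    · exact key _ (X_mem_cliffSub _ _) (X_mem_cliffSub _ _) (commute_C_X h).eq
  · by_cases h : ⟨k, hk⟩ = j
    · subst h
      exact key _ (X_mem_cliffSub _ _) (Xinv_mem_cliffSub _ _) (C_mul_Xinv _)
    · exact key _ (Xinv_mem_cliffSub _ _) (Xinv_mem_cliffSub _ _) (commute_C_Xinv h).eq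
  · by_cases h : ⟨k, hk⟩ = j
    · subst h
      rw [add_mul, mul_assoc, C_mul_self, mul_one]
      exact Submodule.add_mem _ (mul_mem_leftSpanPair ha) (self_mem_leftSpanPair hb)
    · have hj : (j : ℕ) < k := lt_of_le_of_ne (Nat.lt_succ_iff.1 hj) (by rintro rfl; exact h rfl)
      refine key (-C F q j) (neg_mem (C_mem_cliffSub hj)) (C_mem_cliffSub hj) ?_
      exact (C_mul_C h).trans (neg_mul (C F q j) _).symm

theorem cliffSub_zero_le : cliffSub F q n 0 ≤ polySub F q n n := by
  refine Algebra.adjoin_le ?_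
  rintro _ ((⟨j, rfl⟩ | ⟨j, rfl⟩) | ⟨j, hj, rfl⟩)
  · exact X_mem_polySub j.isLt
  · have : Xinv F q j = U F q j - X F q j := by rw [U, add_sub_cancel_left]
    rw [this]
    exact sub_mem (U_mem_polySub _ _) (X_mem_polySub j.isLt)
  · omega

theorem affSub_zero_le : affSub F q n 0 ≤ Subalgebra.toSubmodule (cliffSub F q n n) := by
  refine Submodule.mul_le.2 fun a ha b hb => ?_
  refine mul_mem_of_mem_adjoin ?_ hb ha
  rintro _ ⟨j, hj, rfl⟩
  omega

end Spanning

section HeckeSpanning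

variable (F : Type) [Field F] (q : F) (n : ℕ)

/-- `T_i` indexed by natural numbers, with value `1` outside the range of indices. -/
noncomputable def Tnat (i : ℕ) : H F q n :=
  if h : i < n - 1 then T F q ⟨i, h⟩ else 1

/-- The descending product `T_m T_{m-1} ⋯` with `d` factors. -/
noncomputable def Tdesc (m : ℕ) : ℕ → H F q n
  | 0 => 1
  | d + 1 => Tdesc m d * Tnat F q n (m - d)

variable {F q n}

theorem Tnat_eq {i : ℕ} (h : i < n - 1) : Tnat F q n i = T F q ⟨i, h⟩ := dif_pos h

theorem commute_Tnat {i j : ℕ} (h : i + 1 < j) : Commute (Tnat F q n i) (Tnat F q n j) := by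
  unfold Tnat
  split_ifs with h1 h2
  · exact commute_T_T h
  · exact Commute.one_right _
  · exact Commute.one_left _
  · exact Commute.one_left _

theorem Tnat_braid {i : ℕ} (h : i + 1 < n - 1) :
    Tnat F q n (i + 1) * Tnat F q n i * Tnat F q n (i + 1) =
      Tnat F q n i * Tnat F q n (i + 1) * Tnat F q n i := by
  rw [Tnat_eq h, Tnat_eq (by omega : i < n - 1)]
  exact (T_braid rfl).symm

theorem Tnat_mem_heckeSub {i m : ℕ} (h : i < m) : Tnat F q n i ∈ heckeSub F q n m := by
  unfold Tnat
  split_ifs with h1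
  · exact T_mem_heckeSub h
  · exact one_mem _

theorem commute_Tnat_Tdesc {m i d : ℕ} (h : i + d < m) :
    Commute (Tnat F q n i) (Tdesc F q n m d) := by
  induction d with
  | zero => exact Commute.one_right _
  | succ d ih => exact (ih (by omega)).mul_right (commute_Tnat (by omega))

theorem Tdesc_mul_Tnat {m i d : ℕ} (hm : m < n - 1) (hi : i + 1 ≤ m) (hd : d ≤ m + 1)
    (h : m + 1 ≤ i + d) :
    Tdesc F q n m d * Tnat F q n (i + 1) = Tnat F q n i * Tdesc F q n m d := by
  obtain ⟨e, rfl⟩ : ∃ e, d = e + (m + 1 - i) := ⟨d + i - (m + 1), by omega⟩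
  clear h
  induction e with
  | zero =>
    obtain ⟨e, rfl⟩ : ∃ e, m = i + 1 + e := ⟨m - (i + 1), by omega⟩
    have he : 0 + (i + 1 + e + 1 - i) = e + 1 + 1 := by omega
    rw [he, Tdesc, Tdesc, show i + 1 + e - e = i + 1 by omega,
      show i + 1 + e - (e + 1) = i by omega, mul_assoc, mul_assoc,
      ← mul_assoc (Tnat F q n (i + 1)), Tnat_braid (by omega), ← mul_assoc, ← mul_assoc,
      ← (commute_Tnat_Tdesc (by omega)).eq]
    simp only [mul_assoc]
  | succ e ih =>
    have he : e + 1 + (m + 1 - i) = e + (m + 1 - i) + 1 := by omega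
    rw [he, Tdesc, mul_assoc, (commute_Tnat (by omega)).eq, ← mul_assoc, ih (by omega), mul_assoc]

/-- The left module over the algebra generated by the first `m` of the `T_i`, spanned by the
descending products starting with `T_m`. -/
noncomputable def heckeCosetSpan (F : Type) [Field F] (q : F) (n m : ℕ) : Submodule F (H F q n) :=
  ⨆ d : Fin (m + 2), (Subalgebra.toSubmodule (heckeSub F q n m)).map
    (LinearMap.mulRight F (Tdesc F q n m d))

theorem mul_Tdesc_mem {m d : ℕ} (hd : d < m + 2) {b : H F q n} (hb : b ∈ heckeSub F q n m) :
    b * Tdesc F q n m d ∈ heckeCosetSpan F q n m :=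
  Submodule.mem_iSup_of_mem ⟨d, hd⟩ ⟨b, hb, rfl⟩

theorem heckeSub_succ_le {m : ℕ} (hm : m < n - 1) :
    Subalgebra.toSubmodule (heckeSub F q n (m + 1)) ≤ heckeCosetSpan F q n m := by
  intro x hx
  refine mem_of_mem_adjoin ?_ ?_ hx
  · simpa [Tdesc] using mul_Tdesc_mem (F := F) (q := q) (m := m) (d := 0) (by omega) (one_mem _)
  rintro _ ⟨j, hj, rfl⟩ a ha
  rw [← Tnat_eq j.isLt]
  refine Submodule.iSup_induction _ (motive := fun a => a * Tnat F q n j ∈ heckeCosetSpan F q n m)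
    ha ?_ (by simp) fun x y hx hy => by rw [add_mul]; exact Submodule.add_mem _ hx hy
  rintro ⟨d, hd⟩ _ ⟨b, hb, rfl⟩
  rw [LinearMap.mulRight_apply, mul_assoc]
  dsimp only
  rcases lt_trichotomy (j + d : ℕ) m with h | h | h
  · rw [← (commute_Tnat_Tdesc h).eq, ← mul_assoc]
    exact mul_Tdesc_mem hd (mul_mem hb (Tnat_mem_heckeSub (by omega)))
  · have : (j : ℕ) = m - d := by omega
    rw [this]
    exact mul_Tdesc_mem (d := d + 1) (by omega) hb
  · rcases Nat.lt_or_ge (m + 1) (j + d) with h' | h'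
    · obtain ⟨i, hi⟩ : ∃ i, (j : ℕ) = i + 1 := ⟨j - 1, by omega⟩
      rw [hi, Tdesc_mul_Tnat hm (by omega) (by omega) (by omega), ← mul_assoc]
      exact mul_Tdesc_mem hd (mul_mem hb (Tnat_mem_heckeSub (by omega)))
    · obtain ⟨e, rfl⟩ : ∃ e, d = e + 1 := ⟨d - 1, by omega⟩
      have hj' : m - e = j := by omega
      rw [Tdesc, hj', mul_assoc, Tnat_eq j.isLt, T_mul_self, mul_add, mul_one, mul_smul_comm,
        mul_add, mul_smul_comm, ← Tnat_eq j.isLt]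
      refine Submodule.add_mem _ (Submodule.smul_mem _ _ ?_) (mul_Tdesc_mem (by omega) hb)
      have := mul_Tdesc_mem hd hb
      rwa [Tdesc, hj'] at this

theorem mem_affSub_succ {m : ℕ} (hm : m < n - 1) {z : H F q n} (hz : z ∈ affSub F q n (m + 1)) :
    ∃ b : ℕ → H F q n, (∀ d, b d ∈ affSub F q n m) ∧
      z = ∑ d ∈ Finset.range (m + 2), b d * Tdesc F q n m d := by
  refine Submodule.mul_induction_on hz ?_ ?_
  · intro c hc x hx
    refine Submodule.iSup_induction _ (motive := fun x => ∃ b : ℕ → H F q n,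
      (∀ d, b d ∈ affSub F q n m) ∧
      c * x = ∑ d ∈ Finset.range (m + 2), b d * Tdesc F q n m d) (heckeSub_succ_le hm hx) ?_ ?_ ?_
    · rintro ⟨d, hd⟩ _ ⟨a, ha, rfl⟩
      refine ⟨fun e => if e = d then c * a else 0, fun e => ?_, ?_⟩
      · dsimp only
        split_ifs
        · exact Submodule.mul_mem_mul hc ha
        · exact Submodule.zero_mem _
      · simp [ite_mul, hd, mul_assoc]
    · exact ⟨0, fun _ => Submodule.zero_mem _, by simp⟩
    · rintro x y ⟨b, hb, hx⟩ ⟨b', hb', hy⟩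
      refine ⟨fun d => b d + b' d, fun d => Submodule.add_mem _ (hb d) (hb' d), ?_⟩
      rw [mul_add, hx, hy, ← Finset.sum_add_distrib]
      simp only [add_mul]
  · rintro x y ⟨b, hb, rfl⟩ ⟨b', hb', rfl⟩
    refine ⟨fun d => b d + b' d, fun d => Submodule.add_mem _ (hb d) (hb' d), ?_⟩
    rw [← Finset.sum_add_distrib]
    simp only [add_mul]

theorem mul_T_mem_leftSpanPair {i : Fin (n - 1)} {z : H F q n}
    (hz : z ∈ leftSpanPair (cliffSub F q n n) (T F q i)) :
    z * T F q i ∈ leftSpanPair (cliffSub F q n n) (T F q i) := by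
  obtain ⟨a, ha, b, hb, rfl⟩ := mem_leftSpanPair.1 hz
  rw [add_mul, mul_assoc, T_mul_self, mul_add, mul_one, mul_smul_comm]
  exact Submodule.add_mem _ (mul_mem_leftSpanPair ha) (Submodule.add_mem _
    (Submodule.smul_mem _ _ (mul_mem_leftSpanPair hb)) (self_mem_leftSpanPair hb))

theorem T_mul_mem_leftSpanPair (i : Fin (n - 1)) {x : H F q n} (hx : x ∈ cliffSub F q n n) :
    T F q i * x ∈ leftSpanPair (cliffSub F q n n) (T F q i) := by
  set S := cliffSub F q n n with hS
  set N := leftSpanPair S (T F q i) with hN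
  have hX : ∀ j, X F q j ∈ S := fun j => X_mem_cliffSub j n
  have hC : ∀ j, C F q j ∈ S := fun j => C_mem_cliffSub j.isLt
  have hmul : ∀ {z y}, z ∈ N → y ∈ S → T F q i * y ∈ N → z * y ∈ N := by
    intro z y hz hy hTy
    obtain ⟨a, ha, b, hb, rfl⟩ := mem_leftSpanPair.1 hz
    rw [add_mul, mul_assoc]
    exact Submodule.add_mem _ (self_mem_leftSpanPair (mul_mem ha hy))
      (leftSpanPair_left_mul hb hTy)
  have hcomm : ∀ {y}, y ∈ S → Commute (T F q i) y → T F q i * y ∈ N := by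
    intro y hy h
    rw [h.eq]
    exact mul_mem_leftSpanPair hy
  have hClo : T F q i * C F q (lo i) ∈ N := by
    rw [T_mul_C_lo]
    exact mul_mem_leftSpanPair (hC _)
  have hChi : T F q i * C F q (hi i) ∈ N := by
    have h : C F q (hi i) = T F q i * C F q (lo i) * (T F q i - algebraMap F _ (q - q⁻¹)) := by
      rw [T_mul_C_lo, mul_assoc, T_mul_T_sub, mul_one]
    have h2 : T F q i * (T F q i * C F q (lo i)) ∈ N := by
      rw [← mul_assoc, T_mul_self, add_mul, one_mul, smul_mul_assoc]
      exact Submodule.add_mem _ (Submodule.smul_mem _ _ hClo) (self_mem_leftSpanPair (hC _))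
    rw [h, ← mul_assoc, mul_sub, ← Algebra.commutes, ← Algebra.smul_def]
    exact Submodule.sub_mem _ (mul_T_mem_leftSpanPair h2) (Submodule.smul_mem _ _ h2)
  have hCall : ∀ j, T F q i * C F q j ∈ N := by
    intro j
    by_cases h1 : j = lo i
    · rw [h1]; exact hClo
    by_cases h2 : j = hi i
    · rw [h2]; exact hChi
    exact hcomm (hC j) (commute_T_C h1 h2)
  have hXlo : T F q i * X F q (lo i) ∈ N := by
    rw [T_mul_X_lo]
    exact Submodule.sub_mem _ (Submodule.sub_mem _ (mul_mem_leftSpanPair (hX _))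
      (Submodule.smul_mem _ _ (self_mem_leftSpanPair (hX _))))
      (Submodule.smul_mem _ _ (self_mem_leftSpanPair (mul_mem (mul_mem (hC _) (hC _)) (hX _))))
  have hXhi : T F q i * X F q (hi i) ∈ N := by
    rw [← T_cross, ← mul_assoc, ← mul_assoc]
    refine mul_T_mem_leftSpanPair (hmul ?_ (hX _) hXlo)
    rw [mul_add, mul_smul_comm, T_mul_self, ← mul_assoc]
    exact Submodule.add_mem _ (Submodule.add_mem _
      (Submodule.smul_mem _ _ (by simpa using mul_mem_leftSpanPair (one_mem S)))
      (self_mem_leftSpanPair (one_mem S))) (Submodule.smul_mem _ _ (hmul hClo (hC _) hChi))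
  have hXall : ∀ j, T F q i * X F q j ∈ N := by
    intro j
    by_cases h1 : j = lo i
    · rw [h1]; exact hXlo
    by_cases h2 : j = hi i
    · rw [h2]; exact hXhi
    exact hcomm (hX j) (commute_T_X h1 h2)
  have hXinv : ∀ j, T F q i * Xinv F q j ∈ N := by
    intro j
    have h : Xinv F q j = C F q j * X F q j * C F q j := by
      rw [C_mul_X, mul_assoc, C_mul_self, mul_one]
    rw [h, ← mul_assoc, ← mul_assoc]
    exact hmul (hmul (hCall j) (hX j) (hXall j)) (hC j) (hCall j)
  refine mul_mem_of_mem_adjoin ?_ hx (by simpa using mul_mem_leftSpanPair (one_mem S))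
  rintro _ ((⟨j, rfl⟩ | ⟨j, rfl⟩) | ⟨j, _, rfl⟩) a ha
  · exact hmul ha (hX j) (hXall j)
  · exact hmul ha (Xinv_mem_cliffSub j n) (hXinv j)
  · exact hmul ha (hC j) (hCall j)

/-- A left-multiplication-closed submodule containing `1` is everything. -/
theorem eq_top_of_gen_mul_mem {N : Submodule F (H F q n)} (h1 : 1 ∈ N)
    (hX : ∀ i, ∀ a ∈ N, X F q i * a ∈ N) (hXinv : ∀ i, ∀ a ∈ N, Xinv F q i * a ∈ N)
    (hC : ∀ i, ∀ a ∈ N, C F q i * a ∈ N) (hT : ∀ i, ∀ a ∈ N, T F q i * a ∈ N) : N = ⊤ := by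
  refine (Submodule.eq_top_iff' ).2 fun z => ?_
  obtain ⟨f, rfl⟩ := RingQuot.mkAlgHom_surjective F (Rel F q n) z
  suffices h : ∀ a ∈ N, RingQuot.mkAlgHom F (Rel F q n) f * a ∈ N by simpa using h 1 h1
  induction f using FreeAlgebra.induction with
  | grade0 r =>
    intro a ha
    rw [AlgHom.commutes, ← Algebra.smul_def]
    exact Submodule.smul_mem _ _ ha
  | grade1 g =>
    cases g with
    | X i => exact hX i
    | Xinv i => exact hXinv i
    | C i => exact hC i
    | T i => exact hT i
  | mul f g hf hg =>
    intro a ha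
    rw [map_mul, mul_assoc]
    exact hf _ (hg _ ha)
  | add f g hf hg =>
    intro a ha
    rw [map_add, add_mul]
    exact Submodule.add_mem _ (hf _ ha) (hg _ ha)

theorem affSub_eq_top : affSub F q n (n - 1) = ⊤ := by
  have hS : ∀ s ∈ cliffSub F q n n, ∀ a ∈ affSub F q n (n - 1), s * a ∈ affSub F q n (n - 1) := by
    intro s hs a ha
    refine Submodule.mul_induction_on ha ?_ fun x y hx hy => by
      rw [mul_add]; exact Submodule.add_mem _ hx hy
    intro c hc b hb
    rw [← mul_assoc]
    exact Submodule.mul_mem_mul ((cliffSub F q n n).mul_mem hs hc) hb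
  refine eq_top_of_gen_mul_mem ?_ (fun i => hS _ (X_mem_cliffSub i n))
    (fun i => hS _ (Xinv_mem_cliffSub i n)) (fun i => hS _ (C_mem_cliffSub i.isLt)) ?_
  · have h := Submodule.mul_mem_mul
      ((Subalgebra.mem_toSubmodule _).2 (one_mem (cliffSub F q n n)))
      ((Subalgebra.mem_toSubmodule _).2 (one_mem (heckeSub F q n (n - 1))))
    rwa [one_mul] at h
  · intro i a ha
    refine Submodule.mul_induction_on ha ?_ fun x y hx hy => by
      rw [mul_add]; exact Submodule.add_mem _ hx hy
    intro c hc b hb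
    obtain ⟨a, ha, a', ha', h⟩ := mem_leftSpanPair.1 (T_mul_mem_leftSpanPair i hc)
    rw [← mul_assoc, h, add_mul, mul_assoc]
    exact Submodule.add_mem _ (Submodule.mul_mem_mul ha hb)
      (Submodule.mul_mem_mul ha' ((heckeSub F q n (n - 1)).mul_mem (T_mem_heckeSub i.isLt) hb))

end HeckeSpanning

section GenericPoints

variable {F : Type} [Field F]

/-- A tuple of nonzero parameters `y_i` is generic if the `u_i = y_i + y_i⁻¹` are distinct, differ
from `±2`, and the intertwining elements are invertible at it. -/
def IsGeneric (ξ : F) {n : ℕ} (y : Fin n → F) : Prop :=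
  (∀ i, y i ≠ 0 ∧ (y i + (y i)⁻¹) ^ 2 ≠ 4) ∧
    ∀ i j, i ≠ j → y i + (y i)⁻¹ ≠ y j + (y j)⁻¹ ∧
      (y i + (y i)⁻¹ - (y j + (y j)⁻¹)) ^ 2 -
        ξ ^ 2 * ((y i + (y i)⁻¹) * (y j + (y j)⁻¹) - 4) ≠ 0

/-- Generic parameters together with a labelling of the indices. -/
@[ext] structure Pt (ξ : F) (n : ℕ) where
  /-- The parameters. -/
  y : Fin n → F
  /-- The labelling. -/
  w : Equiv.Perm (Fin n)
  generic : IsGeneric ξ y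

namespace Pt

variable {ξ : F} {n : ℕ}

theorem y_ne_zero (p : Pt ξ n) (i : Fin n) : p.y i ≠ 0 := (p.generic.1 i).1

/-- The value `u_i = y_i + y_i⁻¹`. -/
def u (p : Pt ξ n) (i : Fin n) : F := p.y i + (p.y i)⁻¹

theorem u_ne (p : Pt ξ n) {i j : Fin n} (h : i ≠ j) : p.u i ≠ p.u j := (p.generic.2 i j h).1

theorem y_ne (p : Pt ξ n) {i j : Fin n} (h : i ≠ j) : p.y i - p.y j ≠ 0 := by
  intro hy
  exact p.u_ne h (by rw [u, u, sub_eq_zero.1 hy])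

theorem y_mul_ne (p : Pt ξ n) {i j : Fin n} (h : i ≠ j) : p.y i * p.y j - 1 ≠ 0 := by
  intro hy
  have := eq_inv_of_mul_eq_one_left (sub_eq_zero.1 hy)
  exact p.u_ne h (by rw [u, u, this, inv_inv, add_comm])

theorem y_sub_inv_ne (p : Pt ξ n) (i : Fin n) : p.y i - (p.y i)⁻¹ ≠ 0 := by
  intro h
  have h0 := p.y_ne_zero i
  have h' : p.y i * p.y i = 1 := by
    nth_rewrite 2 [sub_eq_zero.1 h]
    exact mul_inv_cancel₀ h0
  refine (p.generic.1 i).2 ?_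
  rw [← sub_eq_zero.1 h]
  linear_combination 4 * h'

/-- Inversion of the `k`-th parameter. -/
def inv (k : Fin n) (p : Pt ξ n) : Pt ξ n where
  y i := if i = k then (p.y i)⁻¹ else p.y i
  w := p.w
  generic := by
    have h : ∀ i, (if i = k then (p.y i)⁻¹ else p.y i) + (if i = k then (p.y i)⁻¹ else p.y i)⁻¹ =
        p.y i + (p.y i)⁻¹ := by
      intro i
      split_ifs
      · rw [inv_inv, add_comm]
      · rfl
    refine ⟨fun i => ⟨?_, ?_⟩, fun i j hij => ?_⟩
    · dsimp only
      split_ifs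
      · exact inv_ne_zero (p.y_ne_zero i)
      · exact p.y_ne_zero i
    · rw [h]
      exact (p.generic.1 i).2
    · rw [h, h]
      exact p.generic.2 i j hij

/-- Permutation of the parameters. -/
def act (σ : Equiv.Perm (Fin n)) (p : Pt ξ n) : Pt ξ n where
  y i := p.y (σ i)
  w := p.w * σ
  generic := ⟨fun i => p.generic.1 (σ i), fun i j h => p.generic.2 (σ i) (σ j) (σ.injective.ne h)⟩

theorem inv_y_self (k : Fin n) (p : Pt ξ n) : (p.inv k).y k = (p.y k)⁻¹ := if_pos rfl

theorem inv_y_of_ne {i k : Fin n} (h : i ≠ k) (p : Pt ξ n) : (p.inv k).y i = p.y i := if_neg h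

@[simp] theorem act_y (σ : Equiv.Perm (Fin n)) (p : Pt ξ n) (i : Fin n) :
    (p.act σ).y i = p.y (σ i) := rfl

@[simp] theorem act_u (σ : Equiv.Perm (Fin n)) (p : Pt ξ n) (i : Fin n) :
    (p.act σ).u i = p.u (σ i) := rfl

@[simp] theorem inv_u (k : Fin n) (p : Pt ξ n) (i : Fin n) : (p.inv k).u i = p.u i := by
  by_cases h : i = k
  · subst h
    rw [u, inv_y_self, inv_inv, u, add_comm]
  · rw [u, inv_y_of_ne h, u]

@[simp] theorem inv_w (k : Fin n) (p : Pt ξ n) : (p.inv k).w = p.w := rfl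

@[simp] theorem inv_inv_self (k : Fin n) (p : Pt ξ n) : (p.inv k).inv k = p := by
  ext i
  · by_cases h : i = k
    · subst h
      rw [inv_y_self, inv_y_self, inv_inv]
    · rw [inv_y_of_ne h, inv_y_of_ne h]
  · rfl

theorem inv_comm (i j : Fin n) (p : Pt ξ n) : (p.inv i).inv j = (p.inv j).inv i := by
  ext k
  · simp only [inv]
    split_ifs <;> rfl
  · rfl

theorem inv_act (σ : Equiv.Perm (Fin n)) (k : Fin n) (p : Pt ξ n) :
    (p.act σ).inv k = (p.inv (σ k)).act σ := by
  ext i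
  · simp [inv, act]
  · rfl

end Pt
end GenericPoints

section Operators

variable {F : Type} [Field F]

/-- The Clifford algebra with `n` anticommuting square roots of one. -/
def Spin (F : Type) [Field F] (n : ℕ) : Type :=
  CliffordAlgebra (QuadraticMap.weightedSumSquares F fun _ : Fin n => (1 : F))

noncomputable instance (F : Type) [Field F] (n : ℕ) : Ring (Spin F n) :=
  inferInstanceAs (Ring (CliffordAlgebra _))

noncomputable instance (F : Type) [Field F] (n : ℕ) : Algebra F (Spin F n) :=
  inferInstanceAs (Algebra F (CliffordAlgebra _))

/-- The generators of the Clifford algebra. -/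
noncomputable def spinGen (F : Type) [Field F] {n : ℕ} (i : Fin n) : Spin F n :=
  CliffordAlgebra.ι (QuadraticMap.weightedSumSquares F fun _ : Fin n => (1 : F)) (Pi.single i 1)

theorem spinGen_mul_self {n : ℕ} (i : Fin n) : spinGen F i * spinGen F i = 1 := by
  refine (CliffordAlgebra.ι_sq_scalar _ _).trans ?_
  rw [QuadraticMap.weightedSumSquares_apply, Finset.sum_eq_single i]
  · rw [Pi.single_eq_same, one_mul, smul_eq_mul, one_mul, map_one]
    rfl
  · intro j _ h
    simp [Pi.single_eq_of_ne h]
  · simp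

theorem spinGen_mul_spinGen {n : ℕ} {i j : Fin n} (h : i ≠ j) :
    spinGen F i * spinGen F j = -(spinGen F j * spinGen F i) := by
  refine CliffordAlgebra.ι_mul_ι_comm_of_isOrtho ?_
  rw [QuadraticMap.isOrtho_def, QuadraticMap.weightedSumSquares_apply,
    QuadraticMap.weightedSumSquares_apply, QuadraticMap.weightedSumSquares_apply,
    ← Finset.sum_add_distrib]
  refine Finset.sum_congr rfl fun k _ => ?_
  by_cases hk : k = i
  · subst hk
    simp [Pi.single_eq_of_ne h]
  · simp [Pi.single_eq_of_ne hk]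

/-- The space on which the affine Hecke–Clifford superalgebra is represented. -/
abbrev Fun (ξ : F) (n : ℕ) : Type := Pt ξ n → Spin F n

/-- The multiplication operators. -/
noncomputable def mulOp (ξ : F) (n : ℕ) : (Pt ξ n → F) →ₐ[F] Module.End F (Fun ξ n) where
  toFun f :=
    { toFun v p := f p • v p
      map_add' v w := by ext p; simp
      map_smul' c v := by ext p; simp [smul_comm c] }
  map_one' := by ext v p; simp
  map_mul' f g := by ext v p; simp [mul_smul]
  map_zero' := by ext v p; simp
  map_add' f g := by ext v p; simp [add_smul]
  commutes' c := by ext v p; simp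

/-- The Clifford operators. -/
noncomputable def cliffOp (ξ : F) {n : ℕ} (i : Fin n) : Module.End F (Fun ξ n) where
  toFun v p := spinGen F (p.w i) * v (p.inv i)
  map_add' v w := by ext p; simp [mul_add]
  map_smul' c v := by ext p; simp

/-- The permutation operators. -/
noncomputable def permOp (ξ : F) {n : ℕ} (σ : Equiv.Perm (Fin n)) : Module.End F (Fun ξ n) where
  toFun v p := v (p.act σ)
  map_add' _ _ := rfl
  map_smul' _ _ := rfl

variable {ξ : F} {n : ℕ}

theorem mulOp_apply (f : Pt ξ n → F) (v : Fun ξ n) (p : Pt ξ n) : mulOp ξ n f v p = f p • v p := rfl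

theorem cliffOp_apply (i : Fin n) (v : Fun ξ n) (p : Pt ξ n) :
    cliffOp ξ i v p = spinGen F (p.w i) * v (p.inv i) := rfl

theorem permOp_apply (σ : Equiv.Perm (Fin n)) (v : Fun ξ n) (p : Pt ξ n) :
    permOp ξ σ v p = v (p.act σ) := rfl

theorem cliffOp_mul_mulOp (i : Fin n) (f : Pt ξ n → F) :
    cliffOp ξ i * mulOp ξ n f = mulOp ξ n (fun p => f (p.inv i)) * cliffOp ξ i := by
  ext v p
  simp [mulOp_apply, cliffOp_apply]

theorem cliffOp_mul_self (i : Fin n) : cliffOp ξ i * cliffOp ξ i = 1 := by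
  ext v p
  simp [cliffOp_apply, ← mul_assoc, spinGen_mul_self]

theorem cliffOp_mul_cliffOp {i j : Fin n} (h : i ≠ j) :
    cliffOp ξ i * cliffOp ξ j = -(cliffOp ξ j * cliffOp ξ i) := by
  ext v p
  simp [cliffOp_apply, ← mul_assoc, Pt.inv_comm i j, spinGen_mul_spinGen (p.w.injective.ne h)]

theorem permOp_mul_mulOp (σ : Equiv.Perm (Fin n)) (f : Pt ξ n → F) :
    permOp ξ σ * mulOp ξ n f = mulOp ξ n (fun p => f (p.act σ)) * permOp ξ σ := rfl

theorem permOp_mul_cliffOp (σ : Equiv.Perm (Fin n)) (i : Fin n) :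
    permOp ξ σ * cliffOp ξ i = cliffOp ξ (σ i) * permOp ξ σ := by
  ext v p
  simp only [Module.End.mul_apply, permOp_apply, cliffOp_apply, Pt.inv_act]
  rfl

theorem nontrivial_spin (h2 : (2 : F) ≠ 0) (n : ℕ) : Nontrivial (Spin F n) := by
  have := invertibleOfNonzero h2
  exact inferInstanceAs (Nontrivial (CliffordAlgebra _))

theorem mulOp_injective (h2 : (2 : F) ≠ 0) : Function.Injective (mulOp ξ n) := by
  have := nontrivial_spin h2 n
  intro f g h
  funext p
  have := congrFun (LinearMap.congr_fun h fun _ => 1) p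
  rw [mulOp_apply, mulOp_apply] at this
  exact smul_left_injective F one_ne_zero this

end Operators

/-- A representation of the crossed product of the functions on generic points with the Clifford
algebra and the symmetric group. -/
structure CrossedSystem {F : Type} [Field F] (ξ : F) (n : ℕ) (E : Type) [Ring E] [Algebra F E] where
  /-- The multiplication operators. -/
  m : (Pt ξ n → F) →ₐ[F] E
  /-- The Clifford operators. -/
  c : Fin n → E
  /-- The permutation operators. -/
  w : Equiv.Perm (Fin n) →* E
  m_injective : Function.Injective m
  c_mul_m : ∀ i f, c i * m f = m (fun p => f (p.inv i)) * c i
  c_mul_self : ∀ i, c i * c i = 1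
  c_mul_c : ∀ i j, i ≠ j → c i * c j = -(c j * c i)
  w_mul_m : ∀ σ f, w σ * m f = m (fun p => f (p.act σ)) * w σ
  w_mul_c : ∀ σ i, w σ * c i = c (σ i) * w σ

/-- The crossed system of operators on functions with values in the Clifford algebra. -/
noncomputable def operatorSystem {F : Type} [Field F] (h2 : (2 : F) ≠ 0) (ξ : F) (n : ℕ) :
    CrossedSystem ξ n (Module.End F (Fun ξ n)) where
  m := mulOp ξ n
  c := cliffOp ξ
  w := { toFun := permOp ξ, map_one' := rfl, map_mul' := fun _ _ => rfl }
  m_injective := mulOp_injective h2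
  c_mul_m := cliffOp_mul_mulOp
  c_mul_self := cliffOp_mul_self
  c_mul_c _ _ := cliffOp_mul_cliffOp
  w_mul_m := permOp_mul_mulOp
  w_mul_c := permOp_mul_cliffOp

section Intertwiners

variable {F : Type} [Field F] {ξ : F} {n : ℕ} {E : Type} [Ring E] [Algebra F E]

/-- The function `1 + R_{ij} R_{ji}`. -/
noncomputable def normFun (ξ : F) {n : ℕ} (i j : Fin n) (p : Pt ξ n) : F :=
  ((p.u i - p.u j) ^ 2 - ξ ^ 2 * (p.u i * p.u j - 4)) / (p.u i - p.u j) ^ 2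

namespace CrossedSystem

variable (S : CrossedSystem ξ n E)

/-- The rational part `ξ (y_j / (y_j - y_i) + (y_i y_j - 1)⁻¹ C_i C_j)` of the action of a Hecke
generator. -/
noncomputable def r (i j : Fin n) : E :=
  S.m (fun p => ξ * (p.y j / (p.y j - p.y i))) +
    S.m (fun p => ξ * (p.y i * p.y j - 1)⁻¹) * (S.c i * S.c j)

theorem commute_m_m (f g : Pt ξ n → F) : Commute (S.m f) (S.m g) :=
  (Commute.all f g).map S.m

theorem commute_c_m {i : Fin n} {f : Pt ξ n → F} (h : ∀ p, f (p.inv i) = f p) :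
    Commute (S.c i) (S.m f) := by
  rw [Commute, SemiconjBy, S.c_mul_m]
  simp only [h]

theorem m_eq_m {f g : Pt ξ n → F} (h : ∀ p, f p = g p) : S.m f = S.m g :=
  congrArg S.m (funext h)

theorem cc_mul_m (i j : Fin n) (f : Pt ξ n → F) :
    S.c i * S.c j * S.m f = S.m (fun p => f ((p.inv i).inv j)) * (S.c i * S.c j) := by
  rw [mul_assoc, S.c_mul_m, ← mul_assoc, S.c_mul_m, mul_assoc]

theorem cc_mul_cc_mid (i j k : Fin n) :
    S.c i * S.c j * (S.c j * S.c k) = S.c i * S.c k := by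
  rw [mul_assoc, ← mul_assoc (S.c j), S.c_mul_self, one_mul]

theorem cc_mul_cc_left {i j k : Fin n} (hij : i ≠ j) (hjk : j ≠ k) :
    S.c i * S.c j * (S.c i * S.c k) = S.c k * S.c j := by
  rw [S.c_mul_c i j hij, neg_mul, S.cc_mul_cc_mid, S.c_mul_c j k hjk, neg_neg]

theorem cc_mul_cc_right {i j k : Fin n} (hij : i ≠ j) (hik : i ≠ k) :
    S.c j * S.c k * (S.c i * S.c k) = S.c i * S.c j := by
  rw [S.c_mul_c i k hik, mul_neg, S.cc_mul_cc_mid, S.c_mul_c i j hij]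

theorem m_add_mul_m_add (f g f' g' : Pt ξ n → F) (i j k l : Fin n) :
    (S.m f + S.m g * (S.c i * S.c j)) * (S.m f' + S.m g' * (S.c k * S.c l)) =
      S.m (f * f') + S.m (f * g') * (S.c k * S.c l) +
        S.m (g * fun p => f' ((p.inv i).inv j)) * (S.c i * S.c j) +
        S.m (g * fun p => g' ((p.inv i).inv j)) * (S.c i * S.c j * (S.c k * S.c l)) := by
  simp only [map_mul, add_mul, mul_add]
  rw [mul_assoc (S.m g), cc_mul_m, ← mul_assoc (S.m g * _), mul_assoc (S.m g) _ (S.m g'), cc_mul_m]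
  simp only [mul_assoc]
  abel

theorem r_add_r {i j : Fin n} (h : i ≠ j) : S.r i j + S.r j i = algebraMap F E ξ := by
  have h0 : ∀ a b c d k : E, a + b * k + (c + d * -k) = (a + c) + (b - d) * k :=
    fun a b c d k => by noncomm_ring
  rw [r, r, S.c_mul_c j i h.symm, h0, ← map_add, ← map_sub, ← AlgHom.commutes S.m]
  have e1 : ((fun p : Pt ξ n => ξ * (p.y i * p.y j - 1)⁻¹) -
      fun p : Pt ξ n => ξ * (p.y j * p.y i - 1)⁻¹) = 0 := by
    funext p
    simp [mul_comm]
  rw [e1, map_zero, zero_mul, add_zero]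
  refine S.m_eq_m fun p => ?_
  have h1 := p.y_ne h
  have h2 := p.y_ne h.symm
  simp only [Pi.add_apply, Pi.algebraMap_apply, Algebra.algebraMap_self, RingHom.id_apply]
  field_simp
  ring

theorem r_mul_r {i j : Fin n} (h : i ≠ j) :
    S.r i j * S.r j i = S.m (normFun ξ i j) - 1 := by
  have h0 : ∀ a b c d k : E, a + b * -k + c * k + d = (a + d) + (c - b) * k :=
    fun a b c d k => by noncomm_ring
  rw [r, r, m_add_mul_m_add, S.cc_mul_cc_mid, S.c_mul_self, mul_one, S.c_mul_c j i h.symm, h0,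
    ← map_add, ← map_sub, ← map_one S.m, ← map_sub]
  rw [show ∀ a b : Pt ξ n → F, ∀ k : E, b = 0 → S.m a + S.m b * k = S.m a from
    fun a b k hb => by rw [hb, map_zero, zero_mul, add_zero]]
  · refine S.m_eq_m fun p => ?_
    have h1 := p.y_ne_zero i
    have h2 := p.y_ne_zero j
    have h3 := p.y_ne h
    have h5 := p.y_mul_ne h
    have hu : p.u i - p.u j = (p.y i - p.y j) * (p.y i * p.y j - 1) / (p.y i * p.y j) := by
      simp only [Pt.u]; field_simp; ring
    have h6 : (p.y j)⁻¹ * (p.y i)⁻¹ - 1 = - (p.y i * p.y j - 1) / (p.y i * p.y j) := by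
      field_simp; ring
    have h7 : p.y j - p.y i = - (p.y i - p.y j) := by ring
    have h8 := p.y_mul_ne h.symm
    simp only [Pi.add_apply, Pi.sub_apply, Pi.mul_apply, Pi.one_apply,
      Pt.inv_y_self, Pt.inv_y_of_ne h, Pt.inv_y_of_ne h.symm, normFun, hu, h6, h7]
    simp only [Pt.u]
    field_simp
    ring
  · funext p
    have h1 := p.y_ne_zero i
    have h2 := p.y_ne_zero j
    have h3 := p.y_ne h
    have h5 := p.y_mul_ne h
    have h7 : p.y j - p.y i = - (p.y i - p.y j) := by ring
    have h8 : (p.y i)⁻¹ - (p.y j)⁻¹ = - (p.y i - p.y j) / (p.y i * p.y j) := by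
      field_simp; ring
    simp only [Pi.sub_apply, Pi.mul_apply, Pi.zero_apply, mul_comm (p.y j) (p.y i),
      Pt.inv_y_self, Pt.inv_y_of_ne h, Pt.inv_y_of_ne h.symm, h7, h8]
    field_simp
    ring

theorem r_yang_baxter {i j k : Fin n} (hij : i ≠ j) (hik : i ≠ k) (hjk : j ≠ k) :
    S.r j k * S.r i k + S.r i k * S.r i j = S.r i j * S.r j k + ξ • S.r i k := by
  simp only [r, m_add_mul_m_add, S.cc_mul_cc_mid, S.cc_mul_cc_left hik hjk.symm,
    S.cc_mul_cc_right hij hik, smul_add, ← smul_mul_assoc, ← map_smul]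
  set K₁ := S.c i * S.c j
  set K₂ := S.c j * S.c k
  set K₃ := S.c i * S.c k
  have h0 : ∀ a₀ a₁ a₂ a₃ b₀ b₁ b₂ b₃ d₀ d₁ d₂ d₃ e₀ e₃ : Pt ξ n → F,
      a₀ + b₀ = d₀ + e₀ → a₁ + b₁ = d₁ → a₂ + b₂ = d₂ → a₃ + b₃ = d₃ + e₃ →
      S.m a₀ + S.m a₃ * K₃ + S.m a₂ * K₂ + S.m a₁ * K₁ +
        (S.m b₀ + S.m b₁ * K₁ + S.m b₃ * K₃ + S.m b₂ * K₂) =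
      S.m d₀ + S.m d₂ * K₂ + S.m d₁ * K₁ + S.m d₃ * K₃ + (S.m e₀ + S.m e₃ * K₃) := by
    intro a₀ a₁ a₂ a₃ b₀ b₁ b₂ b₃ d₀ d₁ d₂ d₃ e₀ e₃ h0 h1 h2 h3
    have h0' := congrArg S.m h0
    have h3' := congrArg S.m h3
    rw [map_add, map_add] at h0' h3'
    rw [← h1, ← h2, map_add, map_add, add_mul, add_mul]
    have h3'' := congrArg (· * K₃) h3'
    simp only [add_mul] at h3''
    have := congrArg₂ (· + ·) h0' h3''
    rw [← sub_eq_zero] at this ⊢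
    rw [← this]
    abel
  have hinv : ∀ p : Pt ξ n, ∀ i j : Fin n, p.y i * (p.y j)⁻¹ - 1 = (p.y i - p.y j) / p.y j := by
    intro p i j
    have := p.y_ne_zero j
    field_simp
  have hinv' : ∀ p : Pt ξ n, ∀ i j : Fin n, (p.y i)⁻¹ * p.y j - 1 = -(p.y i - p.y j) / p.y i := by
    intro p i j
    have := p.y_ne_zero i
    field_simp
    ring
  have hinv2 : ∀ p : Pt ξ n, ∀ i j : Fin n, p.y i - (p.y j)⁻¹ = (p.y i * p.y j - 1) / p.y j := by
    intro p i j
    have := p.y_ne_zero j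
    field_simp
  have hinv2' : ∀ p : Pt ξ n, ∀ i j : Fin n,
      (p.y i)⁻¹ - p.y j = -(p.y i * p.y j - 1) / p.y i := by
    intro p i j
    have := p.y_ne_zero i
    field_simp
    ring
  have hj : ∀ p : Pt ξ n, p.y j - p.y i = -(p.y i - p.y j) := fun p => by ring
  have hk : ∀ p : Pt ξ n, p.y k - p.y i = -(p.y i - p.y k) := fun p => by ring
  have hk' : ∀ p : Pt ξ n, p.y k - p.y j = -(p.y j - p.y k) := fun p => by ring
  apply h0 <;>
  · funext p
    have h1 := p.y_ne_zero i
    have h2 := p.y_ne_zero j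
    have h3 := p.y_ne_zero k
    have h4 := p.y_ne hij
    have h5 := p.y_ne hik
    have h6 := p.y_ne hjk
    have h7 := p.y_mul_ne hij
    have h8 := p.y_mul_ne hik
    have h9 := p.y_mul_ne hjk
    have h7' := p.y_mul_ne hij.symm
    have h8' := p.y_mul_ne hik.symm
    have h9' := p.y_mul_ne hjk.symm
    simp only [Pi.add_apply, Pi.mul_apply, Pi.smul_apply, smul_eq_mul,
      Pt.inv_y_self, Pt.inv_y_of_ne hij, Pt.inv_y_of_ne hij.symm, Pt.inv_y_of_ne hik,
      Pt.inv_y_of_ne hik.symm, Pt.inv_y_of_ne hjk, Pt.inv_y_of_ne hjk.symm, hinv, hinv', hinv2,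
      hinv2', hj, hk, hk']
    field_simp
    ring

end CrossedSystem
end Intertwiners

section HeckeOperators

variable {F : Type} [Field F] {ξ : F} {n : ℕ} {E : Type} [Ring E] [Algebra F E]

namespace CrossedSystem

variable (S : CrossedSystem ξ n E)

theorem commute_r_m {i j : Fin n} {f : Pt ξ n → F} (h : ∀ p, f ((p.inv i).inv j) = f p) :
    Commute (S.r i j) (S.m f) := by
  refine (S.commute_m_m _ _).add_left ((S.commute_m_m _ _).mul_left ?_)
  rw [Commute, SemiconjBy, cc_mul_m]
  simp only [h]

theorem commute_r_c {i j k : Fin n} (hi : k ≠ i) (hj : k ≠ j) : Commute (S.r i j) (S.c k) := by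
  have hf : ∀ g : F → F → F, Commute (S.m fun p => g (p.y i) (p.y j)) (S.c k) := fun g =>
    (S.commute_c_m fun p => by rw [Pt.inv_y_of_ne hi.symm, Pt.inv_y_of_ne hj.symm]).symm
  refine (hf fun x y => ξ * (y / (y - x))).add_left
    ((hf fun x y => ξ * (x * y - 1)⁻¹).mul_left ?_)
  rw [Commute, SemiconjBy, mul_assoc, S.c_mul_c j k hj.symm, mul_neg, ← mul_assoc,
    S.c_mul_c i k hi.symm, neg_mul, neg_neg, mul_assoc]

theorem isUnit_m {f : Pt ξ n → F} (h : ∀ p, f p ≠ 0) : IsUnit (S.m f) :=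
  (Pi.isUnit_iff.2 fun p => (h p).isUnit).map S.m

theorem r_mul_c {i j : Fin n} (h : i ≠ j) : S.r i j * S.c i = S.c j * S.r i j := by
  have h1 : S.c i * S.c j * S.c i = - S.c j := by
    rw [S.c_mul_c i j h, neg_mul, mul_assoc, S.c_mul_self, mul_one]
  have h2 : S.c j * (S.c i * S.c j) = - S.c i := by
    rw [S.c_mul_c i j h, mul_neg, ← mul_assoc, S.c_mul_self, one_mul]
  rw [r, add_mul, mul_add, mul_assoc, h1, ← mul_assoc (S.c j), S.c_mul_m, S.c_mul_m, mul_assoc _ _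
    (_ * _), h2, mul_neg, mul_neg, ← neg_mul, ← neg_mul, ← map_neg, ← map_neg, add_comm]
  congr 2
  all_goals
    refine S.m_eq_m fun p => ?_
    have hi := p.y_ne_zero i
    have hj := p.y_ne_zero j
    have h3 := p.y_ne h
    have h4 := p.y_mul_ne h
    have h5 := p.y_mul_ne h.symm
    have h6 : p.y j - p.y i = -(p.y i - p.y j) := by ring
    have h7 : (p.y j)⁻¹ - p.y i = -(p.y j * p.y i - 1) / p.y j := by field_simp; ring
    have h8 : p.y i * (p.y j)⁻¹ - 1 = (p.y i - p.y j) / p.y j := by field_simp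
    simp only [Pi.neg_apply, Pt.inv_y_self, Pt.inv_y_of_ne h, h6, h7, h8]
    field_simp

theorem r_mul_m_y {i j : Fin n} (h : i ≠ j) :
    S.r i j * S.m (fun p => p.y i) = S.m (fun p => p.y j) * S.r i j - ξ • S.m (fun p => p.y j)
      - ξ • (S.c i * S.c j * S.m fun p => p.y i) := by
  rw [r, add_mul, mul_add, mul_assoc (S.m _) (_ * _) (S.m _), cc_mul_m,
    ← mul_assoc (S.m _) (S.m _) (_ * _), ← mul_assoc (S.m fun p => p.y j) (S.m _) (_ * _),
    ← smul_mul_assoc, ← map_smul, ← map_smul, ← map_mul, ← map_mul, ← map_mul, ← map_mul]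
  have h0 : ∀ a b a' b' c d : Pt ξ n → F, ∀ K : E, a = a' - c → b = b' - d →
      S.m a + S.m b * K = S.m a' + S.m b' * K - S.m c - S.m d * K := by
    rintro a b a' b' c d K rfl rfl
    rw [map_sub, map_sub]
    noncomm_ring
  apply h0 <;>
  · funext p
    have hi := p.y_ne_zero i
    have h3 := p.y_ne h.symm
    have h4 := p.y_mul_ne h
    simp only [Pi.sub_apply, Pi.mul_apply, Pi.smul_apply, smul_eq_mul, Pt.inv_y_self,
      Pt.inv_y_of_ne h]
    field_simp
    ring

theorem w_mul_r (σ : Equiv.Perm (Fin n)) (i j : Fin n) :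
    S.w σ * S.r i j = S.r (σ i) (σ j) * S.w σ := by
  rw [r, r, mul_add, add_mul, ← mul_assoc, S.w_mul_m, S.w_mul_m]
  simp only [mul_assoc, Pt.act_y]
  rw [← mul_assoc (S.w σ), S.w_mul_c, mul_assoc, S.w_mul_c]

theorem commute_r_r {i j k l : Fin n} (hik : i ≠ k) (hil : i ≠ l) (hjk : j ≠ k) (hjl : j ≠ l) :
    Commute (S.r i j) (S.r k l) := by
  have hf : ∀ g : F → F → F, Commute (S.r i j) (S.m fun p => g (p.y k) (p.y l)) := fun g =>
    S.commute_r_m fun p => by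
      rw [Pt.inv_y_of_ne hjk.symm, Pt.inv_y_of_ne hjl.symm, Pt.inv_y_of_ne hik.symm,
        Pt.inv_y_of_ne hil.symm]
  exact (hf fun x y => ξ * (y / (y - x))).add_right ((hf fun x y => ξ * (x * y - 1)⁻¹).mul_right
    ((S.commute_r_c hik.symm hjk.symm).mul_right (S.commute_r_c hil.symm hjl.symm)))

end CrossedSystem

/-- A square root of the norm of the intertwining elements. -/
noncomputable def sqrtNorm [IsAlgClosed F] (ξ : F) {n : ℕ} (i j : Fin n) (p : Pt ξ n) : F :=
  (IsAlgClosed.exists_pow_nat_eq (normFun ξ i j p) two_pos).choose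

theorem normFun_comm (i j : Fin n) (p : Pt ξ n) : normFun ξ i j p = normFun ξ j i p := by
  rw [normFun, normFun, sub_sq_comm, mul_comm (p.u i)]

theorem normFun_ne_zero {i j : Fin n} (h : i ≠ j) (p : Pt ξ n) : normFun ξ i j p ≠ 0 :=
  div_ne_zero (p.generic.2 i j h).2 (pow_ne_zero 2 (sub_ne_zero.2 (p.u_ne h)))

theorem normFun_inv (i j k : Fin n) (p : Pt ξ n) :
    normFun ξ i j (p.inv k) = normFun ξ i j p := by
  simp only [normFun, Pt.inv_u]

variable [IsAlgClosed F]

theorem sqrtNorm_sq (i j : Fin n) (p : Pt ξ n) : sqrtNorm ξ i j p ^ 2 = normFun ξ i j p :=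
  (IsAlgClosed.exists_pow_nat_eq (normFun ξ i j p) two_pos).choose_spec

theorem sqrtNorm_comm (i j : Fin n) (p : Pt ξ n) : sqrtNorm ξ i j p = sqrtNorm ξ j i p := by
  simp only [sqrtNorm, normFun_comm i j]

theorem sqrtNorm_inv (i j k : Fin n) (p : Pt ξ n) :
    sqrtNorm ξ i j (p.inv k) = sqrtNorm ξ i j p := by
  simp only [sqrtNorm, normFun_inv]

theorem sqrtNorm_act (σ : Equiv.Perm (Fin n)) (i j : Fin n) (p : Pt ξ n) :
    sqrtNorm ξ i j (p.act σ) = sqrtNorm ξ (σ i) (σ j) p := rfl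

theorem sqrtNorm_ne_zero {i j : Fin n} (h : i ≠ j) (p : Pt ξ n) : sqrtNorm ξ i j p ≠ 0 := by
  intro h0
  have := sqrtNorm_sq i j p
  rw [h0, zero_pow two_ne_zero] at this
  exact normFun_ne_zero h p this.symm

namespace CrossedSystem

variable (S : CrossedSystem ξ n E)

/-- The normalized intertwining elements. -/
noncomputable def phi (i j : Fin n) : E := S.m (sqrtNorm ξ i j) * S.w (Equiv.swap i j)

theorem phi_mul_m (i j : Fin n) (f : Pt ξ n → F) :
    S.phi i j * S.m f = S.m (fun p => f (p.act (Equiv.swap i j))) * S.phi i j := by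
  rw [phi, mul_assoc, S.w_mul_m, ← mul_assoc, ← mul_assoc, (S.commute_m_m _ _).eq]

theorem phi_mul_c (i j k : Fin n) :
    S.phi i j * S.c k = S.c (Equiv.swap i j k) * S.phi i j := by
  rw [phi, mul_assoc, S.w_mul_c, ← mul_assoc, ← mul_assoc,
    (S.commute_c_m (sqrtNorm_inv i j _)).eq]

theorem phi_mul_r (i j k l : Fin n) :
    S.phi i j * S.r k l = S.r (Equiv.swap i j k) (Equiv.swap i j l) * S.phi i j := by
  rw [phi, mul_assoc, S.w_mul_r, ← mul_assoc, ← mul_assoc,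
    (S.commute_r_m fun p => by rw [sqrtNorm_inv, sqrtNorm_inv]).eq]

theorem phi_mul_self (i j : Fin n) : S.phi i j * S.phi i j = S.m (normFun ξ i j) := by
  nth_rewrite 2 [phi]
  rw [← mul_assoc, S.phi_mul_m, phi, mul_assoc, mul_assoc, ← map_mul, Equiv.swap_mul_self, map_one,
    mul_one, ← map_mul]
  refine S.m_eq_m fun p => ?_
  rw [Pi.mul_apply, sqrtNorm_act, Equiv.swap_apply_left, Equiv.swap_apply_right,
    ← sqrtNorm_comm, ← sq, sqrtNorm_sq]

theorem phi_mul_phi (i j k l : Fin n) :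
    S.phi i j * S.phi k l = S.m (sqrtNorm ξ i j) * S.m (sqrtNorm ξ (Equiv.swap i j k)
      (Equiv.swap i j l)) * S.w (Equiv.swap i j * Equiv.swap k l) := by
  rw [phi, phi, mul_assoc, ← mul_assoc (S.w _), S.w_mul_m, mul_assoc, ← map_mul, ← mul_assoc]
  rfl

theorem commute_phi_phi {i j k l : Fin n} (hik : i ≠ k) (hil : i ≠ l) (hjk : j ≠ k)
    (hjl : j ≠ l) : Commute (S.phi i j) (S.phi k l) := by
  rw [Commute, SemiconjBy, phi_mul_phi, phi_mul_phi, Equiv.swap_apply_of_ne_of_ne hik.symm hjk.symm,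
    Equiv.swap_apply_of_ne_of_ne hil.symm hjl.symm, Equiv.swap_apply_of_ne_of_ne hik hil,
    Equiv.swap_apply_of_ne_of_ne hjk hjl, (S.commute_m_m _ _).eq]
  congr 2
  refine Equiv.Perm.Disjoint.commute fun x => ?_
  by_cases hi : x = i
  · exact Or.inr (hi ▸ Equiv.swap_apply_of_ne_of_ne hik hil)
  by_cases hj : x = j
  · exact Or.inr (hj ▸ Equiv.swap_apply_of_ne_of_ne hjk hjl)
  · exact Or.inl (Equiv.swap_apply_of_ne_of_ne hi hj)

theorem phi_braid {i j k : Fin n} (hij : i ≠ j) (hik : i ≠ k) (hjk : j ≠ k) :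
    S.phi i j * S.phi j k * S.phi i j = S.phi j k * S.phi i j * S.phi j k := by
  have hw : Equiv.swap i j * Equiv.swap j k * Equiv.swap i j =
      Equiv.swap j k * Equiv.swap i j * Equiv.swap j k := by
    rw [Equiv.swap_mul_swap_mul_swap hij hik, Equiv.swap_comm i j, Equiv.swap_comm j k,
      Equiv.swap_mul_swap_mul_swap hjk.symm hik.symm, Equiv.swap_comm]
  have ha : ∀ {a b : Fin n} (σ : Equiv.Perm (Fin n)) (f : Pt ξ n → F), S.m f * S.w σ * S.phi a b =
      S.m f * S.m (sqrtNorm ξ (σ a) (σ b)) * S.w (σ * Equiv.swap a b) := fun σ f => by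
    rw [phi, mul_assoc, ← mul_assoc (S.w σ), S.w_mul_m, mul_assoc, ← map_mul, ← mul_assoc]
    rfl
  rw [phi_mul_phi, phi_mul_phi, ← map_mul, ← map_mul, ha, ha, hw]
  congr 1
  simp only [Equiv.Perm.mul_apply, Equiv.swap_apply_left, Equiv.swap_apply_right,
    Equiv.swap_apply_of_ne_of_ne hij hik, Equiv.swap_apply_of_ne_of_ne hik.symm hjk.symm]
  rw [← map_mul, ← map_mul]
  exact congrArg S.m (by ring)

theorem isUnit_phi {i j : Fin n} (h : i ≠ j) : IsUnit (S.phi i j) :=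
  (S.isUnit_m (sqrtNorm_ne_zero h)).mul ((Group.isUnit _).map S.w)

end CrossedSystem
end HeckeOperators

section HeckeGenerators

variable {F : Type} [Field F] {ξ : F} {n : ℕ} {E : Type} [Ring E] [Algebra F E]

namespace CrossedSystem

variable (S : CrossedSystem ξ n E)

theorem r_swap {i j : Fin n} (h : i ≠ j) : S.r j i = algebraMap F E ξ - S.r i j :=
  eq_sub_of_add_eq' (S.r_add_r h)

theorem r_mul_self {i j : Fin n} (h : i ≠ j) :
    S.r i j * S.r i j = ξ • S.r i j - (S.m (normFun ξ i j) - 1) := by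
  rw [← S.r_mul_r h, S.r_swap h, mul_sub, ← Algebra.commutes, ← Algebra.smul_def, sub_sub_cancel]

variable [IsAlgClosed F]

/-- The operators by which the Hecke generators act. -/
noncomputable def hk (i j : Fin n) : E := S.phi i j + S.r i j

theorem hk_mul_self {i j : Fin n} (h : i ≠ j) :
    S.hk i j * S.hk i j = ξ • S.hk i j + 1 := by
  have h1 := S.phi_mul_r i j i j
  rw [Equiv.swap_apply_left, Equiv.swap_apply_right, S.r_swap h, sub_mul, ← Algebra.smul_def] at h1
  rw [hk, add_mul, mul_add, mul_add, h1, S.phi_mul_self, S.r_mul_self h, smul_add]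
  abel

theorem hk_braid {i j k : Fin n} (hij : i ≠ j) (hik : i ≠ k) (hjk : j ≠ k) :
    S.hk i j * S.hk j k * S.hk i j = S.hk j k * S.hk i j * S.hk j k := by
  have sij : Equiv.swap i j k = k := Equiv.swap_apply_of_ne_of_ne hik.symm hjk.symm
  have sjk : Equiv.swap j k i = i := Equiv.swap_apply_of_ne_of_ne hij hik
  have a12 : S.phi i j * S.r i j = S.r j i * S.phi i j := by
    rw [phi_mul_r, Equiv.swap_apply_left, Equiv.swap_apply_right]
  have a23 : S.phi i j * S.r j k = S.r i k * S.phi i j := by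
    rw [phi_mul_r, sij, Equiv.swap_apply_right]
  have a13 : S.phi i j * S.r i k = S.r j k * S.phi i j := by
    rw [phi_mul_r, sij, Equiv.swap_apply_left]
  have b13 : S.phi j k * S.r i k = S.r i j * S.phi j k := by
    rw [phi_mul_r, sjk, Equiv.swap_apply_right]
  have b12 : S.phi j k * S.r i j = S.r i k * S.phi j k := by
    rw [phi_mul_r, sjk, Equiv.swap_apply_left]
  have b23 : S.phi j k * S.r j k = S.r k j * S.phi j k := by
    rw [phi_mul_r, Equiv.swap_apply_left, Equiv.swap_apply_right]
  have ab := S.phi_braid hij hik hjk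
  have aa := S.phi_mul_self i j
  have bb := S.phi_mul_self j k
  have n12 := S.r_mul_r hij.symm
  rw [show normFun ξ j i = normFun ξ i j from funext (normFun_comm j i)] at n12
  have n23 := S.r_mul_r hjk
  have c23 : S.m (normFun ξ j k) * S.r i k = S.r i k * S.m (normFun ξ j k) :=
    (S.commute_r_m fun p => by rw [normFun_inv, normFun_inv]).symm.eq
  have y := S.r_yang_baxter hij hik hjk
  rw [Algebra.smul_def] at y
  have y' := S.r_yang_baxter hjk.symm hik.symm hij.symm
  rw [Algebra.smul_def, S.r_swap hik, S.r_swap hij, S.r_swap hjk] at y'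
  have s12 := S.r_add_r hij
  have s23 := S.r_add_r hjk
  have hξ : ∀ x : E, algebraMap F E ξ * x = x * algebraMap F E ξ := Algebra.commutes ξ
  simp only [hk]
  generalize S.phi i j = a at *
  generalize S.phi j k = b at *
  generalize S.r i j = r12 at *
  generalize S.r j i = r21 at *
  generalize S.r j k = r23 at *
  generalize S.r k j = r32 at *
  generalize S.r i k = r13 at *
  generalize S.m (normFun ξ i j) = N at *
  generalize S.m (normFun ξ j k) = M at *
  generalize algebraMap F E ξ = x at *
  have y1 : r23 * r13 = r12 * r23 + r13 * r21 := by
    have : r21 = x - r12 := eq_sub_of_add_eq' s12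
    rw [this, mul_sub, ← hξ, eq_sub_of_add_eq y]
    abel
  have y2 : r13 * r12 = r12 * r23 + r32 * r13 := by
    have : r32 = x - r23 := eq_sub_of_add_eq' s23
    rw [this, sub_mul, eq_sub_of_add_eq' y]
    abel
  have y3 : r12 * r13 = r13 * r32 + r23 * r12 := by
    have : r32 = x - r23 := eq_sub_of_add_eq' s23
    rw [this]
    linear_combination (norm := noncomm_ring) y' - hξ r12 + hξ r23
  have e1 : (a + r12) * (b + r23) * (a + r12) = a * b * a + r23 * a * b + r13 * N +
      r13 * r21 * a + r12 * b * a + r12 * r13 * b + r12 * r23 * a + r12 * r23 * r12 := by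
    linear_combination (norm := noncomm_ring) a * b12 + a13 * b + a23 * a + r13 * aa + a23 * r12 +
      r13 * a12 + r12 * b12
  have e2 : (b + r23) * (a + r12) * (b + r23) = b * a * b + r23 * a * b + r13 * M +
      r13 * r32 * b + r12 * b * a + r23 * r13 * a + r23 * r12 * b + r23 * r12 * r23 := by
    linear_combination (norm := noncomm_ring) b * a23 + b13 * a + b12 * b + r13 * bb + b12 * r23 +
      r13 * b23 + r23 * a23
  rw [e1, e2]
  linear_combination (norm := noncomm_ring) ab - y1 * a + y3 * b - y1 * r12 + r23 * y2 - r13 * n12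
    + n23 * r13 + c23

theorem commute_hk_hk {i j k l : Fin n} (hik : i ≠ k) (hil : i ≠ l) (hjk : j ≠ k) (hjl : j ≠ l) :
    Commute (S.hk i j) (S.hk k l) := by
  have h : ∀ {i j k l : Fin n}, i ≠ k → i ≠ l → j ≠ k → j ≠ l →
      Commute (S.phi i j) (S.r k l) := fun {i j k l} hik hil hjk hjl => by
    rw [Commute, SemiconjBy, phi_mul_r, Equiv.swap_apply_of_ne_of_ne hik.symm hjk.symm,
      Equiv.swap_apply_of_ne_of_ne hil.symm hjl.symm]
  exact ((S.commute_phi_phi hik hil hjk hjl).add_right (h hik hil hjk hjl)).add_left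
    ((h hik.symm hjk.symm hil.symm hjl.symm).symm.add_right (S.commute_r_r hik hil hjk hjl))

theorem hk_mul_c {i j : Fin n} (h : i ≠ j) : S.hk i j * S.c i = S.c j * S.hk i j := by
  rw [hk, add_mul, mul_add, phi_mul_c, Equiv.swap_apply_left, S.r_mul_c h]

theorem commute_hk_c {i j k : Fin n} (hi : k ≠ i) (hj : k ≠ j) : Commute (S.hk i j) (S.c k) := by
  refine Commute.add_left ?_ (S.commute_r_c hi hj)
  rw [Commute, SemiconjBy, phi_mul_c, Equiv.swap_apply_of_ne_of_ne hi hj]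

theorem commute_hk_m {i j : Fin n} {f : Pt ξ n → F}
    (hr : ∀ p, f ((p.inv i).inv j) = f p) (hs : ∀ p, f (p.act (Equiv.swap i j)) = f p) :
    Commute (S.hk i j) (S.m f) := by
  refine Commute.add_left ?_ (S.commute_r_m hr)
  rw [Commute, SemiconjBy, phi_mul_m]
  simp only [hs]

theorem hk_mul_m_y {i j : Fin n} (h : i ≠ j) :
    S.hk i j * S.m (fun p => p.y i) = S.m (fun p => p.y j) * S.hk i j - ξ • S.m (fun p => p.y j)
      - ξ • (S.c i * S.c j * S.m fun p => p.y i) := by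
  rw [hk, add_mul, S.r_mul_m_y h, phi_mul_m, mul_add]
  simp only [Pt.act_y, Equiv.swap_apply_left]
  abel

theorem hk_cross {i j : Fin n} (h : i ≠ j) :
    (S.hk i j + ξ • (S.c i * S.c j)) * S.m (fun p => p.y i) * S.hk i j = S.m fun p => p.y j := by
  rw [add_mul, S.hk_mul_m_y h, smul_mul_assoc, sub_add_cancel, sub_mul, mul_assoc,
    S.hk_mul_self h, smul_mul_assoc, mul_add, mul_smul_comm, mul_one, add_sub_cancel_left]

end CrossedSystem
end HeckeGenerators

section Representation

variable {F : Type} [Field F] [IsAlgClosed F] {q : F} {n : ℕ} {E : Type} [Ring E] [Algebra F E]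

theorem lo_ne_hi (i : Fin (n - 1)) : lo i ≠ hi i := by
  simp [lo, hi]

namespace CrossedSystem

variable (S : CrossedSystem (q - q⁻¹) n E)

/-- The images of the generators in a crossed system. -/
noncomputable def genImage : Gen n → E
  | Gen.X i => S.m fun p => p.y i
  | Gen.Xinv i => S.m fun p => (p.y i)⁻¹
  | Gen.C i => S.c i
  | Gen.T i => S.hk (lo i) (hi i)

theorem genImage_rel {a b : FA F n} (h : Rel F q n a b) :
    FreeAlgebra.lift F S.genImage a = FreeAlgebra.lift F S.genImage b := by
  have hxx : ∀ f g : Pt (q - q⁻¹) n → F, (∀ p, f p * g p = 1) → S.m f * S.m g = 1 :=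
    fun f g hfg => by rw [← map_mul, ← map_one S.m]; exact S.m_eq_m hfg
  induction h <;>
    simp only [fx, fxinv, fc, ft, map_mul, map_add, map_neg, map_smul, map_one,
      FreeAlgebra.lift_ι_apply, genImage]
  case XXinv i => exact hxx _ _ fun p => mul_inv_cancel₀ (p.y_ne_zero i)
  case XinvX i => exact hxx _ _ fun p => inv_mul_cancel₀ (p.y_ne_zero i)
  case XX => exact (S.commute_m_m _ _).eq
  case XiXi => exact (S.commute_m_m _ _).eq
  case XXi => exact (S.commute_m_m _ _).eq
  case CC i => exact S.c_mul_self i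
  case Canti i j h => exact S.c_mul_c i j h
  case CX i => simp only [S.c_mul_m, Pt.inv_y_self]
  case CXi i => simp only [S.c_mul_m, Pt.inv_y_self, inv_inv]
  case CXo i j h => exact (S.commute_c_m fun p => by rw [Pt.inv_y_of_ne h.symm]).eq
  case CXio i j h => exact (S.commute_c_m fun p => by rw [Pt.inv_y_of_ne h.symm]).eq
  case Tquad i => exact S.hk_mul_self (lo_ne_hi i)
  case Tbraid i j h =>
    have hij : hi i = lo j := Fin.ext h.symm
    have hne : lo i ≠ hi j := Fin.ne_of_val_ne (by simp only [lo, hi]; omega)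
    rw [← hij]
    exact S.hk_braid (lo_ne_hi i) hne (hij ▸ lo_ne_hi j)
  case TTfar i j h =>
    refine (S.commute_hk_hk ?_ ?_ ?_ ?_).eq <;>
    · refine Fin.ne_of_val_ne ?_
      simp only [lo, hi]
      omega
  case TC i => exact S.hk_mul_c (lo_ne_hi i)
  case TCo i j h1 h2 => exact (S.commute_hk_c h1 h2).eq
  case TXo i j h1 h2 =>
    refine (S.commute_hk_m (fun p => ?_) fun p => ?_).eq
    · rw [Pt.inv_y_of_ne h2, Pt.inv_y_of_ne h1]
    · rw [Pt.act_y, Equiv.swap_apply_of_ne_of_ne h1 h2]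
  case TXio i j h1 h2 =>
    refine (S.commute_hk_m (fun p => ?_) fun p => ?_).eq
    · rw [Pt.inv_y_of_ne h2, Pt.inv_y_of_ne h1]
    · rw [Pt.act_y, Equiv.swap_apply_of_ne_of_ne h1 h2]
  case cross i => exact S.hk_cross (lo_ne_hi i)

/-- The homomorphism from the affine Hecke–Clifford algebra to a crossed system. -/
noncomputable def rep : H F q n →ₐ[F] E :=
  RingQuot.liftAlgHom F ⟨FreeAlgebra.lift F S.genImage, fun _ _ => S.genImage_rel⟩

theorem rep_X (i : Fin n) : S.rep (X F q i) = S.m fun p => p.y i := by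
  rw [rep, X, RingQuot.liftAlgHom_mkAlgHom_apply, fx, FreeAlgebra.lift_ι_apply, genImage]

theorem rep_Xinv (i : Fin n) : S.rep (Xinv F q i) = S.m fun p => (p.y i)⁻¹ := by
  rw [rep, Xinv, RingQuot.liftAlgHom_mkAlgHom_apply, fxinv, FreeAlgebra.lift_ι_apply, genImage]

theorem rep_C (i : Fin n) : S.rep (C F q i) = S.c i := by
  rw [rep, C, RingQuot.liftAlgHom_mkAlgHom_apply, fc, FreeAlgebra.lift_ι_apply, genImage]

theorem rep_T (i : Fin (n - 1)) : S.rep (T F q i) = S.hk (lo i) (hi i) := by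
  rw [rep, T, RingQuot.liftAlgHom_mkAlgHom_apply, ft, FreeAlgebra.lift_ι_apply, genImage]

theorem rep_U (i : Fin n) : S.rep (U F q i) = S.m fun p => p.u i := by
  rw [U, map_add, rep_X, rep_Xinv, ← map_add]
  rfl

end CrossedSystem
end Representation

section Density

theorem exists_coef {F : Type} [Field F] {q : F} {n : ℕ} {z : H F q n} (hz : z ∈ polySub F q n 0) :
    ∃ coef : (Fin n → ℕ) →₀ F, z = coef.sum fun α c => c • evalSym F q α := by
  obtain ⟨c, hc⟩ := (Finsupp.mem_span_range_iff_exists_finsupp).1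
    (polySub_zero_le_span_evalSym hz)
  exact ⟨c, hc.symm⟩

variable {F : Type} [Field F] {n : ℕ}

theorem exists_add_inv_eq [IsAlgClosed F] (h2 : (2 : F) ≠ 0) (u : F) :
    ∃ y : F, y ≠ 0 ∧ y + y⁻¹ = u := by
  obtain ⟨d, hd⟩ := IsAlgClosed.exists_pow_nat_eq (u ^ 2 - 4) two_pos
  have h : (u + d) / 2 * ((u - d) / 2) = 1 := by
    field_simp
    linear_combination -hd
  refine ⟨(u + d) / 2, left_ne_zero_of_mul_eq_one h, ?_⟩
  rw [inv_eq_of_mul_eq_one_right h]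
  field_simp
  ring

/-- The product of the polynomials in the `u_i` whose nonvanishing expresses genericity. -/
noncomputable def genericPoly (ξ : F) (n : ℕ) : MvPolynomial (Fin n) F :=
  (∏ i, (MvPolynomial.X i ^ 2 - 4)) * ∏ i, ∏ j, if i = j then 1 else
    (MvPolynomial.X i - MvPolynomial.X j) * ((MvPolynomial.X i - MvPolynomial.X j) ^ 2 -
      MvPolynomial.C (ξ ^ 2) * (MvPolynomial.X i * MvPolynomial.X j - 4))

theorem genericPoly_ne_zero (h2 : (2 : F) ≠ 0) (ξ : F) (n : ℕ) : genericPoly ξ n ≠ 0 := by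
  have h4 : (4 : F) ≠ 0 := by
    rw [show (4 : F) = 2 * 2 by norm_num]
    exact mul_ne_zero h2 h2
  have e : ∀ (v : Fin n → F) {P : MvPolynomial (Fin n) F}, MvPolynomial.eval v P ≠ 0 → P ≠ 0 :=
    fun v P h hP => h (by rw [hP, map_zero])
  refine mul_ne_zero (Finset.prod_ne_zero_iff.2 fun i _ => e 0 ?_)
    (Finset.prod_ne_zero_iff.2 fun i _ => Finset.prod_ne_zero_iff.2 fun j _ => ?_)
  · rw [map_sub, map_pow, MvPolynomial.eval_X, map_ofNat, Pi.zero_apply, zero_pow two_ne_zero,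
      zero_sub]
    exact neg_ne_zero.2 h4
  split_ifs with hij
  · exact one_ne_zero
  refine mul_ne_zero (e (Pi.single i 1) ?_) ?_
  · simp [Ne.symm hij]
  intro h
  have h0 := congrArg (MvPolynomial.eval (0 : Fin n → F)) h
  have h1 := congrArg (MvPolynomial.eval (Pi.single i 1 : Fin n → F)) h
  simp only [map_sub, map_mul, map_pow, MvPolynomial.eval_X, MvPolynomial.eval_C, map_ofNat,
    map_zero, Pi.zero_apply, Pi.single_eq_same, Pi.single_eq_of_ne (Ne.symm hij)] at h0 h1
  exact one_ne_zero (α := F) (by linear_combination h1 - h0)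

theorem exists_pt [IsAlgClosed F] (h2 : (2 : F) ≠ 0) {ξ : F} {v : Fin n → F}
    (hv : MvPolynomial.eval v (genericPoly ξ n) ≠ 0) : ∃ p : Pt ξ n, p.u = v := by
  choose y hy0 hy using fun i => exists_add_inv_eq h2 (v i)
  rw [genericPoly, map_mul, map_prod, map_prod, mul_ne_zero_iff, Finset.prod_ne_zero_iff,
    Finset.prod_ne_zero_iff] at hv
  refine ⟨⟨y, 1, fun i => ⟨hy0 i, fun h => hv.1 i (Finset.mem_univ i) ?_⟩, fun i j hij => ?_⟩,
    funext hy⟩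
  · rw [hy] at h
    simp [h]
  · have h := hv.2 i (Finset.mem_univ i)
    rw [map_prod, Finset.prod_ne_zero_iff] at h
    have h' := h j (Finset.mem_univ j)
    rw [if_neg hij, map_mul, mul_ne_zero_iff] at h'
    rw [hy, hy]
    refine ⟨fun e => h'.1 (by simp [e]), fun e => h'.2 ?_⟩
    simpa using e

theorem eq_zero_of_eval_u_eq_zero [IsAlgClosed F] (h2 : (2 : F) ≠ 0) (ξ : F) {G : MvPolynomial (Fin n) F}
    (hG : ∀ p : Pt ξ n, MvPolynomial.eval p.u G = 0) : G = 0 := by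
  have : Infinite F := IsAlgClosed.instInfinite
  have h : G * genericPoly ξ n = 0 := by
    refine MvPolynomial.funext fun v => ?_
    rw [map_mul, map_zero]
    by_cases hv : MvPolynomial.eval v (genericPoly ξ n) = 0
    · rw [hv, mul_zero]
    · obtain ⟨p, rfl⟩ := exists_pt h2 hv
      rw [hG, zero_mul]
  exact (mul_eq_zero.1 h).resolve_right (genericPoly_ne_zero h2 ξ n)

/-- The polynomial with the given coefficients. -/
noncomputable def polyOf (coef : (Fin n → ℕ) →₀ F) : MvPolynomial (Fin n) F :=
  coef.sum fun α c => MvPolynomial.monomial (Finsupp.equivFunOnFinite.symm α) c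

theorem coeff_polyOf (coef : (Fin n → ℕ) →₀ F) (α : Fin n → ℕ) :
    (polyOf coef).coeff (Finsupp.equivFunOnFinite.symm α) = coef α := by
  classical
  simp only [polyOf, Finsupp.sum, MvPolynomial.coeff_sum, MvPolynomial.coeff_monomial,
    EmbeddingLike.apply_eq_iff_eq]
  simp [eq_comm]

namespace CrossedSystem

variable [IsAlgClosed F] {q : F} {E : Type} [Ring E] [Algebra F E] (S : CrossedSystem (q - q⁻¹) n E)

theorem rep_evalSym (α : Fin n → ℕ) :
    S.rep (evalSym F q α) = S.m fun p => ∏ i, p.u i ^ α i := by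
  have h : (fun p : Pt (q - q⁻¹) n => ∏ i, p.u i ^ α i) =
      ((List.finRange n).map fun i => (fun p : Pt (q - q⁻¹) n => p.u i) ^ α i).prod := by
    rw [← List.ofFn_eq_map, List.prod_ofFn]
    funext p
    simp
  rw [h, evalSym, map_list_prod, map_list_prod, List.map_map, List.map_map]
  congr 2
  funext i
  have := S.rep_U i
  rw [U] at this
  simp only [Function.comp_apply, map_pow, this]

theorem rep_sum_evalSym (coef : (Fin n → ℕ) →₀ F) :
    S.rep (coef.sum fun α c => c • evalSym F q α) =
      S.m fun p => MvPolynomial.eval p.u (polyOf coef) := by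
  simp only [Finsupp.sum, map_sum, map_smul, rep_evalSym, polyOf]
  simp only [← map_smul, ← map_sum]
  refine S.m_eq_m fun p => ?_
  simp [MvPolynomial.eval_monomial, Finsupp.prod_fintype]

theorem eq_zero_of_mem_polySub_zero (h2 : (2 : F) ≠ 0) {z : H F q n}
    (hz : z ∈ polySub F q n 0) (h : S.rep z = 0) : z = 0 := by
  obtain ⟨coef, rfl⟩ := exists_coef hz
  rw [rep_sum_evalSym] at h
  have h0 := eq_zero_of_eval_u_eq_zero h2 (q - q⁻¹)
    (congrFun (S.m_injective (h.trans (map_zero S.m).symm)))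
  have : coef = 0 := Finsupp.ext fun α => by rw [← coeff_polyOf, h0]; simp
  rw [this, Finsupp.sum_zero_index]

end CrossedSystem
end Density

section Descent

variable {F : Type} [Field F] {n : ℕ}

theorem mem_affSub {q : F} (z : H F q n) : z ∈ affSub F q n (n - 1) := by
  rw [affSub_eq_top]
  exact Submodule.mem_top

/-- Vectors of distinct weights are independent. -/
theorem eq_zero_of_sum_weight_eq_zero {E ι : Type*} [Ring E] {u : ι → E} {v : E}
    (hu : ∀ i j, Commute (u i) (u j)) {s : Finset ι}
    (hs : ∀ i ∈ s, ∀ j ∈ s, i ≠ j → IsUnit (u i - u j)) {w : ι → E}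
    (hw : ∀ i, w i * u i = v * w i) (h : ∑ i ∈ s, w i = 0) : ∀ i ∈ s, w i = 0 := by
  classical
  induction s using Finset.induction_on generalizing w with
  | empty => simp
  | insert a s ha ih =>
    have hs0 : ∑ i ∈ s, w i * (u i - u a) = 0 := by
      have e : ∑ i ∈ insert a s, w i * (u i - u a) = 0 := by
        simp only [mul_sub, hw]
        rw [Finset.sum_sub_distrib, ← Finset.mul_sum, ← Finset.sum_mul, h, mul_zero, zero_mul,
          sub_zero]
      rwa [Finset.sum_insert ha, sub_self, mul_zero, zero_add] at e
    have h0 : ∀ i ∈ s, w i = 0 := fun i hi => by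
      refine (hs i (Finset.mem_insert_of_mem hi) a (Finset.mem_insert_self a s)
        (fun e => ha (e ▸ hi))).mul_left_eq_zero.1 (ih ?_ ?_ hs0 i hi)
      · exact fun i hi j hj => hs i (Finset.mem_insert_of_mem hi) j (Finset.mem_insert_of_mem hj)
      · intro i
        rw [mul_assoc, ((hu i i).sub_left (hu a i)).eq, ← mul_assoc, hw, mul_assoc]
    rw [Finset.sum_insert ha, Finset.sum_eq_zero h0, add_zero] at h
    intro i hi
    rcases Finset.mem_insert.1 hi with rfl | hi
    exacts [h, h0 i hi]

/-- The index `m + 1 - d`. -/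
def descIdx {n m : ℕ} (hm : m < n - 1) (d : ℕ) : Fin n := ⟨m + 1 - d, by omega⟩

namespace CrossedSystem

variable {q : F} {E : Type} [Ring E] [Algebra F E] (S : CrossedSystem (q - q⁻¹) n E)

theorem eq_zero_of_mul_y_sub_inv_mul_c {b : E} {k : Fin n}
    (h : b * S.m (fun p => p.y k) * S.c k = b * S.m (fun p => (p.y k)⁻¹) * S.c k) : b = 0 := by
  have h1 : ∀ x : E, x * S.c k * S.c k = x := fun x => by rw [mul_assoc, S.c_mul_self, mul_one]
  have h2 := congrArg (· * S.c k) h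
  simp only [h1] at h2
  have h3 : b * S.m (fun p => p.y k - (p.y k)⁻¹) = 0 := by
    rw [← sub_eq_zero, ← mul_sub, ← map_sub] at h2
    exact h2
  exact (S.isUnit_m fun p => p.y_sub_inv_ne k).mul_left_eq_zero.1 h3

variable [IsAlgClosed F]

theorem rep_eq_zero_of_commute_c {k : ℕ} (hk : k < n) {a b : H F q n} (ha : a ∈ polySub F q n k)
    (hb : b ∈ polySub F q n k)
    (h : Commute (S.c ⟨k, hk⟩) (S.rep (a + b * X F q ⟨k, hk⟩))) : S.rep b = 0 := by
  have hc : ∀ {x}, x ∈ polySub F q n k → Commute (S.c ⟨k, hk⟩) (S.rep x) := fun {x} hx => by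
    rw [← rep_C]
    exact (commute_C_polySub (i := ⟨k, hk⟩) le_rfl hx).map S.rep
  refine S.eq_zero_of_mul_y_sub_inv_mul_c (k := ⟨k, hk⟩) ?_
  rw [map_add, map_mul, rep_X, Commute, SemiconjBy, mul_add, add_mul, (hc ha).eq, ← mul_assoc,
    (hc hb).eq, mul_assoc (S.rep b) (S.c _), S.c_mul_m] at h
  simp only [Pt.inv_y_self, ← mul_assoc] at h
  exact (add_left_cancel h).symm

theorem polySub_descent (h2 : (2 : F) ≠ 0) {k : ℕ} (hk : k ≤ n) :
    (∀ z ∈ polySub F q n k, S.rep z = 0 → z = 0) ∧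
      ∀ z ∈ polySub F q n k, (∀ j, Commute (S.c j) (S.rep z)) → z ∈ polySub F q n 0 := by
  induction k with
  | zero => exact ⟨fun z => S.eq_zero_of_mem_polySub_zero h2, fun z hz _ => hz⟩
  | succ k ih =>
    obtain ⟨ih1, ih2⟩ := ih (by omega)
    have key : ∀ z ∈ polySub F q n (k + 1), (∀ j, Commute (S.c j) (S.rep z)) →
        z ∈ polySub F q n k := by
      intro z hz h
      obtain ⟨a, ha, b, hb, rfl⟩ := mem_polySub_succ hk hz
      rw [ih1 b hb (S.rep_eq_zero_of_commute_c hk ha hb (h _)), zero_mul, add_zero]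
      exact ha
    exact ⟨fun z hz h => ih1 z (key z hz fun j => h ▸ Commute.zero_right _) h,
      fun z hz h => ih2 z (key z hz h) h⟩

theorem rep_eq_zero_of_commute_y {k : ℕ} (hk : k < n) {a b : H F q n}
    (ha : a ∈ cliffSub F q n k) (hb : b ∈ cliffSub F q n k)
    (h : Commute (S.rep (X F q ⟨k, hk⟩)) (S.rep (a + b * C F q ⟨k, hk⟩))) : S.rep b = 0 := by
  have hc : ∀ {x}, x ∈ cliffSub F q n k → Commute (S.m fun p => p.y ⟨k, hk⟩) (S.rep x) :=
    fun {x} hx => by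
      rw [← rep_X]
      exact (commute_X_cliffSub (i := ⟨k, hk⟩) le_rfl hx).map S.rep
  refine S.eq_zero_of_mul_y_sub_inv_mul_c (k := ⟨k, hk⟩) ?_
  rw [map_add, map_mul, rep_X, rep_C, Commute, SemiconjBy, mul_add, add_mul, (hc ha).eq,
    ← mul_assoc, (hc hb).eq, mul_assoc (S.rep b) (S.c _), S.c_mul_m] at h
  simp only [Pt.inv_y_self, ← mul_assoc] at h
  exact add_left_cancel h

theorem cliffSub_descent (h2 : (2 : F) ≠ 0) {k : ℕ} (hk : k ≤ n) :
    (∀ z ∈ cliffSub F q n k, S.rep z = 0 → z = 0) ∧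
      ∀ z ∈ cliffSub F q n k, (∀ j, Commute (S.rep (X F q j)) (S.rep z)) →
        z ∈ cliffSub F q n 0 := by
  induction k with
  | zero =>
    exact ⟨fun z hz => (S.polySub_descent h2 le_rfl).1 z (cliffSub_zero_le hz), fun z hz _ => hz⟩
  | succ k ih =>
    obtain ⟨ih1, ih2⟩ := ih (by omega)
    have key : ∀ z ∈ cliffSub F q n (k + 1), (∀ j, Commute (S.rep (X F q j)) (S.rep z)) →
        z ∈ cliffSub F q n k := by
      intro z hz h
      obtain ⟨a, ha, b, hb, rfl⟩ := mem_cliffSub_succ hk hz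
      rw [ih1 b hb (S.rep_eq_zero_of_commute_y hk ha hb (h _)), zero_mul, add_zero]
      exact ha
    exact ⟨fun z hz h => ih1 z (key z hz fun j => h ▸ Commute.zero_right _) h,
      fun z hz h => ih2 z (key z hz h) h⟩

theorem exists_weight_decomp {m : ℕ} (hm : m < n - 1) {d : ℕ} (hd : d ≤ m + 1) :
    ∃ w : ℕ → E, S.rep (Tdesc F q n m d) = ∑ e ∈ Finset.range (d + 1), w e ∧
      (∀ e, d < e → w e = 0) ∧
      (∀ e, w e * S.m (fun p => p.u (descIdx hm e)) = S.m (fun p => p.u (descIdx hm 0)) * w e) ∧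
      IsUnit (w d) := by
  induction d with
  | zero =>
    refine ⟨fun e => if e = 0 then 1 else 0, by simp [Tdesc], fun e he => if_neg he.ne', ?_,
      by simp⟩
    intro e
    dsimp only
    split_ifs with he
    · rw [he, one_mul, mul_one]
    · rw [zero_mul, mul_zero]
  | succ d ih =>
    obtain ⟨w, hsum, hzero, hw, hunit⟩ := ih (by omega)
    have hlt : m - d < n - 1 := by omega
    have hlo : lo ⟨m - d, hlt⟩ = descIdx hm (d + 1) := Fin.ext (by simp only [lo, descIdx]; omega)
    have hhi : hi ⟨m - d, hlt⟩ = descIdx hm d := Fin.ext (by simp only [hi, descIdx]; omega)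
    have hne : descIdx hm (d + 1) ≠ descIdx hm d := hlo ▸ hhi ▸ lo_ne_hi _
    set i := descIdx hm (d + 1)
    set j := descIdx hm d with hj
    have hru : ∀ k, Commute (S.r i j) (S.m fun p => p.u k) := fun k =>
      S.commute_r_m fun p => by rw [Pt.inv_u, Pt.inv_u]
    refine ⟨fun e => if e = d + 1 then w d * S.phi i j else if e = d then w d * S.r i j else
      w e * S.hk i j, ?_, ?_, ?_, ?_⟩
    · have e1 : ∀ e ∈ Finset.range d, (if e = d + 1 then w d * S.phi i j else if e = d then
          w d * S.r i j else w e * S.hk i j) = w e * S.hk i j := by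
        intro e he
        rw [Finset.mem_range] at he
        rw [if_neg (by omega), if_neg (by omega)]
      rw [Tdesc, map_mul, hsum, Tnat_eq hlt, rep_T, hlo, hhi, Finset.sum_range_succ,
        Finset.sum_range_succ _ (d + 1), Finset.sum_range_succ _ d, Finset.sum_congr rfl e1,
        if_pos rfl, if_neg (by omega), if_pos rfl, add_mul, Finset.sum_mul, add_assoc]
      congr 1
      rw [hk, mul_add, add_comm]
    · intro e he
      dsimp only
      rw [if_neg (by omega), if_neg (by omega), hzero e (by omega), zero_mul]
    · intro e
      dsimp only
      split_ifs with h1 h3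
      · rw [h1, mul_assoc, S.phi_mul_m, ← mul_assoc (S.m _), ← hw, mul_assoc]
        simp only [Pt.act_u]
        rw [Equiv.swap_apply_left]
      · rw [h3, mul_assoc, (hru _).eq, ← mul_assoc, hw, mul_assoc]
      · by_cases hed : d < e
        · rw [hzero e hed, zero_mul, zero_mul, mul_zero]
        rw [mul_assoc, (S.commute_hk_m (fun p => by rw [Pt.inv_u, Pt.inv_u]) fun p => ?_).eq,
          ← mul_assoc, hw, mul_assoc]
        rw [Pt.act_u, Equiv.swap_apply_of_ne_of_ne]
        all_goals
          refine Fin.ne_of_val_ne ?_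
          simp only [i, j, descIdx]
          omega
    · dsimp only
      rw [if_pos rfl]
      exact hunit.mul (S.isUnit_phi hne)

theorem affSub_eq_zero_of_commute {m : ℕ} (hm : m < n - 1) {b : ℕ → H F q n}
    (hinj : ∀ z ∈ affSub F q n m, S.rep z = 0 → z = 0) (hb : ∀ d, b d ∈ affSub F q n m)
    (h : Commute (S.rep (U F q (descIdx hm 0)))
      (S.rep (∑ d ∈ Finset.range (m + 2), b d * Tdesc F q n m d))) :
    ∀ d ∈ Finset.range (m + 2), d ≠ 0 → b d = 0 := by
  choose! w hsum hzero hw hunit using fun d (hd : d ≤ m + 1) => S.exists_weight_decomp hm hd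
  have hbU : ∀ d, Commute (S.m fun p => p.u (descIdx hm 0)) (S.rep (b d)) := fun d => by
    rw [← rep_U]
    exact (commute_U_affSub (by simp [descIdx]) (hb d)).map S.rep
  set v : ℕ → E := fun e => ∑ d ∈ Finset.range (m + 2), S.rep (b d) * w d e with hv
  have hvw : ∀ e, v e * S.m (fun p => p.u (descIdx hm e)) =
      S.m (fun p => p.u (descIdx hm 0)) * v e := by
    intro e
    rw [hv, Finset.sum_mul, Finset.mul_sum]
    refine Finset.sum_congr rfl fun d hd => ?_
    rw [Finset.mem_range] at hd
    rw [mul_assoc, hw d (by omega), ← mul_assoc, ← mul_assoc, (hbU d).eq]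
  have hz : S.rep (∑ d ∈ Finset.range (m + 2), b d * Tdesc F q n m d) =
      ∑ e ∈ Finset.range (m + 2), v e := by
    rw [map_sum, hv, Finset.sum_comm]
    refine Finset.sum_congr rfl fun d hd => ?_
    rw [Finset.mem_range] at hd
    rw [map_mul, hsum d (by omega), ← Finset.mul_sum]
    congr 1
    refine Finset.sum_subset (Finset.range_mono (by omega)) fun e _ he => hzero d (by omega) e ?_
    simpa using he
  have hv0 : ∀ e ∈ Finset.range (m + 2), e ≠ 0 → v e = 0 := by
    have hd : ∀ {d e}, d ∈ Finset.range (m + 2) → e ∈ Finset.range (m + 2) → d ≠ e →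
        IsUnit (S.m (fun p => p.u (descIdx hm d)) - S.m fun p => p.u (descIdx hm e)) := by
      intro d e hd he hde
      rw [Finset.mem_range] at hd he
      rw [← map_sub]
      refine S.isUnit_m fun p => sub_ne_zero.2 (p.u_ne (Fin.ne_of_val_ne ?_))
      simp only [descIdx]
      omega
    intro e he he0
    refine (hd he (Finset.mem_range.2 (by omega)) he0).mul_left_eq_zero.1
      (eq_zero_of_sum_weight_eq_zero (u := fun e => S.m fun p => p.u (descIdx hm e))
        (v := S.m fun p => p.u (descIdx hm 0)) (w := fun e => v e *
          (S.m (fun p => p.u (descIdx hm e)) - S.m fun p => p.u (descIdx hm 0)))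
        (fun _ _ => S.commute_m_m _ _) (fun _ h1 _ h2 => hd h1 h2) ?_ ?_ e he)
    · intro e
      rw [mul_assoc, ((S.commute_m_m _ _).sub_left (S.commute_m_m _ _)).eq, ← mul_assoc, hvw,
        mul_assoc]
    · simp only [mul_sub, hvw]
      rw [Finset.sum_sub_distrib, ← Finset.mul_sum, ← Finset.sum_mul, ← hz, ← rep_U, h.eq, sub_self]
  have main : ∀ k d, d + k = m + 1 → d ≠ 0 → b d = 0 := by
    intro k
    induction k using Nat.strong_induction_on with
    | _ k ih =>
      intro d hdk hd0
      have hd := Finset.mem_range.2 (by omega : d < m + 2)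
      have hvd := hv0 d hd hd0
      simp only [hv] at hvd
      rw [Finset.sum_eq_single_of_mem d hd] at hvd
      · exact hinj _ (hb d) ((hunit d (by omega)).mul_left_eq_zero.1 hvd)
      · intro e he hed
        rw [Finset.mem_range] at he
        rcases lt_or_gt_of_ne hed with hlt | hgt
        · rw [hzero e (by omega) d hlt, mul_zero]
        · rw [ih (m + 1 - e) (by omega) e (by omega) (by omega), map_zero, zero_mul]
  intro d hd
  rw [Finset.mem_range] at hd
  exact main (m + 1 - d) d (by omega)

theorem affSub_descent (h2 : (2 : F) ≠ 0) {m : ℕ} (hm : m ≤ n - 1) :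
    (∀ z ∈ affSub F q n m, S.rep z = 0 → z = 0) ∧
      ∀ z ∈ affSub F q n m, (∀ j, Commute (S.rep (U F q j)) (S.rep z)) →
        z ∈ cliffSub F q n n := by
  induction m with
  | zero =>
    exact ⟨fun z hz => (S.cliffSub_descent h2 le_rfl).1 z (affSub_zero_le hz),
      fun z hz _ => affSub_zero_le hz⟩
  | succ m ih =>
    obtain ⟨ih1, ih2⟩ := ih (by omega)
    have key : ∀ z ∈ affSub F q n (m + 1), (∀ j, Commute (S.rep (U F q j)) (S.rep z)) →
        z ∈ affSub F q n m := by
      intro z hz h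
      obtain ⟨b, hb, rfl⟩ := mem_affSub_succ hm hz
      rw [Finset.sum_eq_single 0 (fun d hd hd0 => by
        rw [S.affSub_eq_zero_of_commute hm ih1 hb (h _) d hd hd0, zero_mul]) (by simp), Tdesc,
        mul_one]
      exact hb 0
    exact ⟨fun z hz h => ih1 z (key z hz fun j => h ▸ Commute.zero_right _) h,
      fun z hz h => ih2 z (key z hz h) h⟩

theorem rep_injective (h2 : (2 : F) ≠ 0) : Function.Injective S.rep :=
  (injective_iff_map_eq_zero S.rep).2 fun z =>
    (S.affSub_descent h2 le_rfl).1 z (mem_affSub z)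

theorem mem_polySub_zero_of_central (S : CrossedSystem (q - q⁻¹) n E) (h2 : (2 : F) ≠ 0)
    {z : H F q n} (hz : ∀ y, z * y = y * z) :
    z ∈ polySub F q n 0 := by
  have hc : ∀ y, Commute (S.rep y) (S.rep z) := fun y => Commute.map (hz y).symm S.rep
  refine (S.polySub_descent h2 le_rfl).2 z (cliffSub_zero_le ((S.cliffSub_descent h2 le_rfl).2 z
    ((S.affSub_descent h2 le_rfl).2 z (mem_affSub z) fun j => hc _)
      fun j => hc _)) fun j => ?_
  rw [← rep_C]
  exact hc _

end CrossedSystem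
end Descent

section Center

variable {F : Type} [Field F] {n : ℕ}

theorem mapDomain_comp_perm (σ : Equiv.Perm (Fin n)) (α : Fin n → ℕ) :
    (Finsupp.equivFunOnFinite.symm (α ∘ σ)).mapDomain σ = Finsupp.equivFunOnFinite.symm α := by
  ext i
  obtain ⟨j, rfl⟩ := σ.surjective i
  rw [Finsupp.mapDomain_apply σ.injective]
  rfl

theorem rename_polyOf_eq_iff {coef : (Fin n → ℕ) →₀ F} {σ : Equiv.Perm (Fin n)} :
    MvPolynomial.rename σ (polyOf coef) = polyOf coef ↔ ∀ α, coef (α ∘ σ) = coef α := by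
  have h : ∀ α, (MvPolynomial.rename σ (polyOf coef)).coeff (Finsupp.equivFunOnFinite.symm α) =
      coef (α ∘ σ) := fun α => by
    rw [← mapDomain_comp_perm σ, MvPolynomial.coeff_rename_mapDomain _ σ.injective, coeff_polyOf]
  constructor
  · intro hG α
    rw [← h, hG, coeff_polyOf]
  · intro hc
    refine MvPolynomial.ext _ _ fun d => ?_
    rw [← Finsupp.equivFunOnFinite.symm_apply_apply d, h, hc, coeff_polyOf]

theorem eval_u_act {ξ : F} (p : Pt ξ n) (σ : Equiv.Perm (Fin n)) (G : MvPolynomial (Fin n) F) :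
    MvPolynomial.eval (p.act σ).u G = MvPolynomial.eval p.u (MvPolynomial.rename σ G) := by
  rw [MvPolynomial.eval_rename]
  rfl

theorem rename_eq_of_simple {G : MvPolynomial (Fin n) F}
    (h : ∀ i : Fin (n - 1), MvPolynomial.rename (Equiv.swap (lo i) (hi i)) G = G)
    (σ : Equiv.Perm (Fin n)) : MvPolynomial.rename σ G = G := by
  match n with
  | 0 => rw [Subsingleton.elim σ 1, Equiv.Perm.coe_one, MvPolynomial.rename_id_apply]
  | n + 1 =>
    have hσ : σ ∈ Submonoid.closure
        (Set.range fun i : Fin n => Equiv.swap i.castSucc i.succ) := by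
      rw [Equiv.Perm.mclosure_swap_castSucc_succ]
      exact Submonoid.mem_top σ
    induction hσ using Submonoid.closure_induction with
    | mem _ hx =>
      obtain ⟨i, rfl⟩ := hx
      exact h i
    | one => rw [Equiv.Perm.coe_one, MvPolynomial.rename_id_apply]
    | mul a b _ _ ha hb => rw [Equiv.Perm.coe_mul, ← MvPolynomial.rename_rename, hb, ha]

theorem central_of_commute_gen {q : F} {z : H F q n} (hX : ∀ i, Commute z (X F q i))
    (hXinv : ∀ i, Commute z (Xinv F q i)) (hC : ∀ i, Commute z (C F q i))
    (hT : ∀ i, Commute z (T F q i)) (y : H F q n) : z * y = y * z := by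
  have hN : Subalgebra.toSubmodule (Subalgebra.centralizer F {z}) = ⊤ := by
    have hm : ∀ {x : H F q n}, Commute z x → ∀ a ∈ Subalgebra.centralizer F {z},
        x * a ∈ Subalgebra.centralizer F {z} := fun {x} hx a ha =>
      mul_mem ((Subalgebra.mem_centralizer_iff F).2 fun g hg => by
        rw [Set.mem_singleton_iff.1 hg, hx.eq]) ha
    exact eq_top_of_gen_mul_mem (one_mem (Subalgebra.centralizer F {z})) (fun i => hm (hX i))
      (fun i => hm (hXinv i)) (fun i => hm (hC i)) fun i => hm (hT i)
  have hy : y ∈ Subalgebra.toSubmodule (Subalgebra.centralizer F {z}) := hN ▸ Submodule.mem_top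
  exact (Subalgebra.mem_centralizer_iff F).1 hy z rfl

namespace CrossedSystem

variable [IsAlgClosed F] {q : F} {E : Type} [Ring E] [Algebra F E]

theorem eval_act_of_commute_hk (S : CrossedSystem (q - q⁻¹) n E) {i j : Fin n} (hij : i ≠ j)
    {G : MvPolynomial (Fin n) F}
    (h : Commute (S.hk i j) (S.m fun p => MvPolynomial.eval p.u G)) (p : Pt (q - q⁻¹) n) :
    MvPolynomial.eval (p.act (Equiv.swap i j)).u G = MvPolynomial.eval p.u G := by
  have hr : Commute (S.r i j) (S.m fun p => MvPolynomial.eval p.u G) :=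
    S.commute_r_m fun p => by
      rw [show ((p.inv i).inv j).u = p.u from funext fun k => by rw [Pt.inv_u, Pt.inv_u]]
  have hphi : Commute (S.phi i j) (S.m fun p => MvPolynomial.eval p.u G) := by
    have := h.sub_left hr
    rwa [hk, add_sub_cancel_right] at this
  rw [Commute, SemiconjBy, phi_mul_m] at hphi
  exact congrFun (S.m_injective ((S.isUnit_phi hij).mul_right_cancel hphi)) p

end CrossedSystem

theorem center_of_crossedSystem [IsAlgClosed F] {q : F} {E : Type} [Ring E] [Algebra F E]
    (S : CrossedSystem (q - q⁻¹) n E) (h2 : (2 : F) ≠ 0) (z : H F q n) :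
    (∀ y : H F q n, z * y = y * z) ↔
      ∃ coef : (Fin n → ℕ) →₀ F,
        (∀ (σ : Equiv.Perm (Fin n)) (α : Fin n → ℕ), coef (α ∘ σ) = coef α) ∧
        z = coef.sum fun α cc => cc • evalSym F q α := by
  constructor
  · intro hz
    obtain ⟨coef, rfl⟩ := exists_coef (S.mem_polySub_zero_of_central h2 hz)
    refine ⟨coef, fun σ => rename_polyOf_eq_iff.1 (rename_eq_of_simple (fun i => ?_) σ), rfl⟩
    refine sub_eq_zero.1 (eq_zero_of_eval_u_eq_zero h2 (q - q⁻¹) fun p => ?_)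
    rw [map_sub, ← eval_u_act, S.eval_act_of_commute_hk (lo_ne_hi i), sub_self]
    rw [← S.rep_sum_evalSym, ← S.rep_T]
    exact Commute.map (hz (T F q i)).symm S.rep
  · rintro ⟨coef, hcoef, rfl⟩
    have hrep := S.rep_sum_evalSym coef
    have hinv : ∀ (k : Fin n) (p : Pt (q - q⁻¹) n), (p.inv k).u = p.u := fun k p =>
      funext fun l => by rw [Pt.inv_u]
    have hc : ∀ {x}, Commute (S.m fun p => MvPolynomial.eval p.u (polyOf coef)) (S.rep x) →
        Commute (coef.sum fun α cc => cc • evalSym F q α) x := fun {x} hx =>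
      S.rep_injective h2 (by rw [map_mul, map_mul, hrep, hx.eq])
    refine central_of_commute_gen (fun i => hc ?_) (fun i => hc ?_) (fun i => hc ?_) fun i => hc ?_
    · rw [S.rep_X]
      exact S.commute_m_m _ _
    · rw [S.rep_Xinv]
      exact S.commute_m_m _ _
    · rw [S.rep_C]
      exact (S.commute_c_m fun p => by rw [hinv]).symm
    · rw [S.rep_T]
      refine (S.commute_hk_m (fun p => by rw [hinv, hinv]) fun p => ?_).symm
      rw [eval_u_act, rename_polyOf_eq_iff.2 (hcoef _)]

end Center

/-- **The center of `H_n`** (Theorem `LCenter` of Brundan–Kleshchev): an element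
`z ∈ H_n` is central (equivalently, supercentral) if and only if it is a symmetric
polynomial in `X_1 + X_1⁻¹, …, X_n + X_n⁻¹`. -/
theorem center_of_affine_hecke_clifford
    (F : Type) [Field F] [IsAlgClosed F] (h2 : (2 : F) ≠ 0)
    (q : F) (hq : GoodParam F q) (n : ℕ) (z : H F q n) :
    (∀ y : H F q n, z * y = y * z) ↔
      ∃ coef : (Fin n → ℕ) →₀ F,
        (∀ (σ : Equiv.Perm (Fin n)) (α : Fin n → ℕ), coef (α ∘ σ) = coef α) ∧
        z = coef.sum fun α cc => cc • evalSym F q α := by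
  exact center_of_crossedSystem (operatorSystem h2 (q - q⁻¹) n) h2 z

end HC
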